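/- arXiv:1708.06659 — 2 statements merged into one kernel-verified Lean document; each statement's English description precedes it below -/
import Mathlib

section
/- Let d, N ∈ ℕ, p ≥ 2, α ∈ (0,1), c₁, c₂ > 0, Q₀ ⊂ ℝ^d a cube, and let u ∈ W^{1,p}(Q₀;ℝ^N) be such that: (i) V(∇u) ∈ W^{1,2}_loc(Q₀) and ∫_Q|∇(V(∇u))|² ≤ (c₁/R²)∫_{4Q}|V(∇u)|² for every cube Q of sidelength R with 4Q ⊂ Q₀; (ii) u has a continuous representative with [u]_{C^α(Q)} ≤ c₂R^{1−α}((⨍_{2Q}|∇u|^p)^{1/p} + 1) for every cube Q of sidelength R with 3Q ⊂ Q₀. Then for every q ∈ (p, p + 2/(1−α)) one has ∇u ∈ L^q_loc(Q₀), and there is C > 0, depending only on d, N, p, q, α, c₁, c₂, such that (⨍_Q|∇u|^q)^{1/q} ≤ C((⨍_{2Q}|∇u|^p)^{1/p} + 1) for every cube Q with 2Q ⊂ Q₀. -/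
open MeasureTheory Filter Metric Set
open scoped ENNReal Topology RealInnerProductSpace

noncomputable section

/-- `ℝ^d` with the Euclidean norm. -/
abbrev Ed (d : ℕ) : Type := EuclideanSpace ℝ (Fin d)
/-- `ℝ^N` with the Euclidean norm. -/
abbrev En (N : ℕ) : Type := EuclideanSpace ℝ (Fin N)
/-- The space of `N × d` matrices with the Euclidean (Frobenius) norm. -/
abbrev Mat (N d : ℕ) : Type := EuclideanSpace ℝ (Fin N × Fin d)

/-- The open axis-parallel cube with center `c` and sidelength `R`. -/
def cube {d : ℕ} (c : Ed d) (R : ℝ) : Set (Ed d) := {x | ∀ i, |x i - c i| < R / 2}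

/-- The `i`-th partial derivative of a scalar function. -/
def pder {d : ℕ} (φ : Ed d → ℝ) (i : Fin d) (x : Ed d) : ℝ :=
  fderiv ℝ φ x (EuclideanSpace.single i 1)

/-- `g` is the weak gradient of `f` on `U`: for every smooth compactly supported scalar test
function `φ` with support in `U` and all indices `a`, `i`,
`∫_U f^a ∂_i φ = −∫_U g^a_i φ`. -/
def IsWeakGrad {d : ℕ} {ι : Type} [Fintype ι] (U : Set (Ed d))
    (f : Ed d → EuclideanSpace ℝ ι) (g : Ed d → EuclideanSpace ℝ (ι × Fin d)) : Prop :=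
  ∀ φ : Ed d → ℝ, ContDiff ℝ (⊤ : ℕ∞) φ → HasCompactSupport φ → tsupport φ ⊆ U →
    ∀ (a : ι) (i : Fin d),
      ∫ x in U, f x a * pder φ i x = - ∫ x in U, g x (a, i) * φ x

/-- The classical gradient matrix of a (smooth) vector-valued function. -/
def clGrad {d N : ℕ} (φ : Ed d → En N) (x : Ed d) : Mat N d :=
  (WithLp.equiv 2 _).symm fun q => fderiv ℝ φ x (EuclideanSpace.single q.2 1) q.1

/-- `V(η) = |η|^{(p-2)/2} η` (so that `V(0) = 0`). -/
def Vm (p : ℝ) {ι : Type} [Fintype ι] (η : EuclideanSpace ℝ ι) : EuclideanSpace ℝ ι :=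
  ‖η‖ ^ ((p - 2) / 2) • η

/-- `u` (with weak gradient `g`) is a weak solution of `div 𝒜(∇u) = 0` on `U`:
`∫_U 𝒜(∇u)·∇φ = 0` for all smooth compactly supported `φ` with support in `U`. -/
def IsWeakSol {d N : ℕ} (U : Set (Ed d)) (𝒜 : Mat N d → Mat N d)
    (g : Ed d → Mat N d) : Prop :=
  ∀ φ : Ed d → En N, ContDiff ℝ (⊤ : ℕ∞) φ → HasCompactSupport φ → tsupport φ ⊆ U →
    ∫ x in U, ⟪𝒜 (g x), clGrad φ x⟫ = 0


theorem Vm_ineq {ι : Type} [Fintype ι] (p : ℝ) (hp : 2 ≤ p) (a b : EuclideanSpace ℝ ι) :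
    ‖a - b‖ ^ p ≤ 2 ^ p * ‖Vm p a - Vm p b‖ ^ 2 := by
  set s := (p - 2) / 2 with hs
  have hs0 : 0 ≤ s := by rw [hs]; linarith
  set A := ‖a‖ ^ s with hA
  set B := ‖b‖ ^ s with hB
  have hA0 : 0 ≤ A := by positivity
  have hB0 : 0 ≤ B := by positivity
  have hmono : 0 ≤ (A - B) * (‖a‖ ^ 2 - ‖b‖ ^ 2) := by
    rcases le_total ‖a‖ ‖b‖ with h | h
    · have h1 : A ≤ B := Real.rpow_le_rpow (norm_nonneg _) h hs0
      have h2 : ‖a‖ ^ 2 ≤ ‖b‖ ^ 2 := by gcongr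
      nlinarith
    · have h1 : B ≤ A := Real.rpow_le_rpow (norm_nonneg _) h hs0
      have h2 : ‖b‖ ^ 2 ≤ ‖a‖ ^ 2 := by gcongr
      nlinarith
  have hinner : ⟪Vm p a - Vm p b, a - b⟫ =
      (A + B) / 2 * ‖a - b‖ ^ 2 + (A - B) * (‖a‖ ^ 2 - ‖b‖ ^ 2) / 2 := by
    have e := @norm_sub_sq_real _ _ _ a b
    have : ⟪Vm p a - Vm p b, a - b⟫ = A * ‖a‖^2 - A * ⟪a, b⟫ - B * ⟪a, b⟫ + B * ‖b‖^2 := by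
      simp only [Vm, ← hs, ← hA, ← hB, inner_sub_left, inner_sub_right, inner_smul_left,
        real_inner_self_eq_norm_sq, real_inner_comm a b]
      simp
      ring
    rw [this, e]; ring
  have hcs := real_inner_le_norm (Vm p a - Vm p b) (a - b)
  have h1 : (A + B) / 2 * ‖a - b‖ ≤ ‖Vm p a - Vm p b‖ := by
    rcases (norm_nonneg (a - b)).eq_or_lt with h | h
    · rw [← h]; simp
    · have : (A + B) / 2 * ‖a - b‖ * ‖a - b‖ ≤ ‖Vm p a - Vm p b‖ * ‖a - b‖ := by nlinarith
      exact le_of_mul_le_mul_right this h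
  have h2 : ‖a - b‖ ^ s ≤ 2 ^ s * (A + B) := by
    have : ‖a - b‖ ≤ 2 * max ‖a‖ ‖b‖ := by
      have := norm_sub_le a b
      have := le_max_left ‖a‖ ‖b‖
      have := le_max_right ‖a‖ ‖b‖
      linarith
    calc ‖a - b‖ ^ s ≤ (2 * max ‖a‖ ‖b‖) ^ s := Real.rpow_le_rpow (norm_nonneg _) this hs0
      _ = 2 ^ s * (max ‖a‖ ‖b‖) ^ s := Real.mul_rpow (by norm_num) (by positivity)
      _ ≤ 2 ^ s * (A + B) := by
        gcongr
        rcases le_total ‖a‖ ‖b‖ with h | h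
        · rw [max_eq_right h]; linarith
        · rw [max_eq_left h]; linarith
  have h3 : ‖a - b‖ ^ (s + 1) ≤ 2 ^ (s + 1) * ‖Vm p a - Vm p b‖ := by
    rw [Real.rpow_add_one' (norm_nonneg _) (by linarith), Real.rpow_add_one (by norm_num)]
    calc ‖a - b‖ ^ s * ‖a - b‖ ≤ 2 ^ s * (A + B) * ‖a - b‖ := by gcongr
      _ = 2 ^ s * 2 * ((A + B) / 2 * ‖a - b‖) := by ring
      _ ≤ _ := by gcongr
  have hsp : p = (s + 1) * (2:ℕ) := by rw [hs]; push_cast; ring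
  have h4 := pow_le_pow_left₀ (by positivity) h3 2
  rw [mul_pow, ← Real.rpow_mul_natCast (norm_nonneg _), ← Real.rpow_mul_natCast (by norm_num),
    ← hsp] at h4
  exact h4

theorem Vm_norm_sq {ι : Type} [Fintype ι] (p : ℝ) (hp : 2 ≤ p) (a : EuclideanSpace ℝ ι) :
    ‖Vm p a‖ ^ 2 = ‖a‖ ^ p := by
  have h3 : ‖Vm p a‖ = ‖a‖ ^ ((p - 2) / 2 + 1) := by
    rw [Vm, norm_smul, Real.rpow_add_one' (norm_nonneg _) (by linarith)]
    congr 1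
    exact abs_of_nonneg (by positivity)
  rw [h3, ← Real.rpow_mul_natCast (norm_nonneg _)]
  congr 1
  push_cast; ring

theorem Vm_continuous {ι : Type} [Fintype ι] (p : ℝ) (hp : 2 ≤ p) :
    Continuous (Vm p : EuclideanSpace ℝ ι → EuclideanSpace ℝ ι) := by
  unfold Vm
  exact (continuous_norm.rpow_const (fun _ => Or.inr (by linarith))).smul continuous_id

theorem cube_eq {d : ℕ} (c : Ed d) (R : ℝ) :
    cube c R = (@WithLp.ofLp 2 (Fin d → ℝ)) ⁻¹'
      (Set.univ.pi fun i => Ioo (c i - R / 2) (c i + R / 2)) := by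
  ext x
  simp only [cube, mem_setOf_eq, mem_preimage, Set.mem_pi, mem_univ, true_imp_iff, mem_Ioo]
  refine forall_congr' fun i => ?_
  rw [abs_lt]
  constructor <;> rintro ⟨h1, h2⟩ <;> constructor <;> linarith

theorem cube_isOpen {d : ℕ} (c : Ed d) (R : ℝ) : IsOpen (cube c R) := by
  rw [cube_eq]
  exact (isOpen_set_pi finite_univ fun i _ => isOpen_Ioo).preimage (PiLp.continuous_ofLp _ _)

theorem cube_meas {d : ℕ} (c : Ed d) (R : ℝ) : MeasurableSet (cube c R) :=
  (cube_isOpen c R).measurableSet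

theorem cube_vol {d : ℕ} (c : Ed d) (R : ℝ) :
    volume (cube c R) = ENNReal.ofReal R ^ d := by
  rw [cube_eq, (PiLp.volume_preserving_ofLp (Fin d)).measure_preimage
    (MeasurableSet.univ_pi fun i => measurableSet_Ioo).nullMeasurableSet, Real.volume_pi_Ioo]
  simp

theorem cube_vol_real {d : ℕ} (c : Ed d) (R : ℝ) (hR : 0 ≤ R) :
    volume.real (cube c R) = R ^ d := by
  rw [measureReal_def, cube_vol, ENNReal.toReal_pow, ENNReal.toReal_ofReal hR]

theorem cube_vol_lt {d : ℕ} (c : Ed d) (R : ℝ) : volume (cube c R) < ⊤ := by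
  rw [cube_vol]; exact ENNReal.pow_lt_top ENNReal.ofReal_lt_top

theorem cube_subset {d : ℕ} (c c' : Ed d) (R R' D : ℝ) (h : ∀ i, |c i - c' i| ≤ D)
    (hR : R / 2 + D ≤ R' / 2) : cube c R ⊆ cube c' R' := by
  intro x hx i
  have := hx i
  have := h i
  have := abs_sub_le (x i) (c i) (c' i)
  linarith

theorem abs_coord_le {d : ℕ} (z : Ed d) (i : Fin d) : |z i| ≤ ‖z‖ :=
  PiLp.norm_apply_le z i

theorem cube_shift {d : ℕ} (c : Ed d) (R R' : ℝ) (x z : Ed d) (hx : x ∈ cube c R)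
    (hz : ‖z‖ ≤ (R' - R) / 2) : x + z ∈ cube c R' := by
  intro i
  have h1 := hx i
  have h2 := abs_coord_le z i
  have h3 := abs_add_le (x i - c i) (z i)
  have : (x + z) i - c i = x i - c i + z i := by simp; ring
  rw [this]; linarith

theorem pder_sum {d : ℕ} (φ : Ed d → ℝ) (x z : Ed d) :
    fderiv ℝ φ x z = ∑ i, z i * pder φ i x := by
  have hz : z = ∑ i, z i • (EuclideanSpace.single i (1:ℝ) : Ed d) := by
    ext j
    simp [Finset.sum_apply, Pi.single_apply]
  conv_lhs => rw [hz]
  rw [map_sum]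
  simp [pder]

theorem line_ae {d : ℕ} (U K : Set (Ed d)) (hK : IsOpen K) (z : Ed d)
    (hz : ∀ x ∈ K, ∀ t ∈ Icc (0:ℝ) 1, x + t • z ∈ U)
    (f H : Ed d → ℝ) (hf : Integrable f) (hH : Integrable H) (hHm : StronglyMeasurable H)
    (hw : ∀ φ : Ed d → ℝ, ContDiff ℝ (⊤ : ℕ∞) φ → HasCompactSupport φ → tsupport φ ⊆ U →
      ∫ x, f x * fderiv ℝ φ x z = - ∫ x, H x * φ x) :
    ∀ᵐ x, x ∈ K → f (x + z) - f x = ∫ t in Ioc (0:ℝ) 1, H (x + t • z) := by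
  set ν : Measure ℝ := volume.restrict (Ioc (0:ℝ) 1) with hν
  have hprod : Integrable (fun q : Ed d × ℝ => H (q.1 + q.2 • z)) (volume.prod ν) := by
    rw [integrable_prod_iff']
    · refine ⟨Eventually.of_forall fun t => hH.comp_add_right (t • z), ?_⟩
      have : (fun t : ℝ => ∫ x, ‖H (x + t • z)‖) = fun _ => ∫ x, ‖H x‖ := by
        ext t
        exact integral_add_right_eq_self (fun x => ‖H x‖) (t • z)
      simp only [this]
      exact integrable_const _
    · refine (hHm.comp_measurable ?_).aestronglyMeasurable
      fun_prop
  have hJ : Integrable (fun x => ∫ t in Ioc (0:ℝ) 1, H (x + t • z)) := hprod.integral_prod_left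
  have key := hK.ae_eq_zero_of_integral_contDiff_smul_eq_zero (μ := volume)
    (f := fun x => f (x + z) - f x - ∫ t in Ioc (0:ℝ) 1, H (x + t • z))
    ((((hf.comp_add_right z).sub hf).sub hJ).locallyIntegrable.locallyIntegrableOn K) ?_
  · filter_upwards [key] with x hx hxK
    linarith [hx hxK]
  intro φ hφ hφc hφs
  have hφcont : Continuous φ := hφ.continuous
  obtain ⟨B, hB⟩ := hφc.exists_bound_of_continuous hφcont
  have hφ1 : Continuous (fun y => fderiv ℝ φ y z) :=
    (hφ.continuous_fderiv (by simp)).clm_apply continuous_const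
  obtain ⟨B', hB'⟩ := (hφc.fderiv_apply ℝ z).exists_bound_of_continuous hφ1
  have mulb : ∀ (F : Ed d → ℝ), Integrable F → Integrable (fun x => φ x * F x) := by
    intro F hF
    exact hF.bdd_mul hφcont.aestronglyMeasurable (Eventually.of_forall hB)
  have e1 : ∫ x, φ x • (f (x + z) - f x - ∫ t in Ioc (0:ℝ) 1, H (x + t • z)) =
      (∫ x, φ x * f (x + z)) - (∫ x, φ x * f x)
        - ∫ x, φ x * ∫ t in Ioc (0:ℝ) 1, H (x + t • z) := by
    have hI : Integrable (fun x => φ x * f (x + z) - φ x * f x) :=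
      (mulb _ (hf.comp_add_right z)).sub (mulb _ hf)
    rw [← integral_sub (mulb _ (hf.comp_add_right z)) (mulb _ hf),
      ← integral_sub hI (mulb _ hJ)]
    congr 1; ext x; simp only [smul_eq_mul]; ring
  have e2 : ∫ x, φ x * f (x + z) = ∫ y, φ (y - z) * f y := by
    rw [← integral_add_right_eq_self (fun y => φ (y - z) * f y) z]
    simp
  have hφz : Integrable (fun y => φ (y - z) * f y) :=
    hf.bdd_mul (hφcont.comp (by fun_prop)).aestronglyMeasurable
      (Eventually.of_forall fun y => hB _)
  -- fundamental theorem of calculus along the segment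
  have e3 : ∀ y, φ (y - z) - φ y = ∫ t in Ioc (0:ℝ) 1, -(fderiv ℝ φ (y - t • z) z) := by
    intro y
    rw [← intervalIntegral.integral_of_le zero_le_one]
    rw [intervalIntegral.integral_eq_sub_of_hasDerivAt (f := fun t : ℝ => φ (y - t • z))]
    · simp
    · intro t _
      have h1 : HasFDerivAt φ (fderiv ℝ φ (y - t • z)) (y - t • z) :=
        (hφ.differentiable (by simp) _).hasFDerivAt
      have h2 : HasDerivAt (fun t : ℝ => y - t • z) (-z) t := by
        simpa using ((hasDerivAt_id t).smul_const z).const_sub y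
      have := h1.comp_hasDerivAt t h2
      rw [map_neg] at this
      exact this
    · apply Continuous.intervalIntegrable
      exact (hφ1.comp (by fun_prop)).neg
  have hprod2 : Integrable (fun q : Ed d × ℝ => f q.1 * -(fderiv ℝ φ (q.1 - q.2 • z) z))
      (volume.prod ν) := by
    have h0 : Integrable (fun q : Ed d × ℝ => f q.1 * 1) (volume.prod ν) :=
      hf.mul_prod (integrable_const (1:ℝ))
    simp only [mul_one] at h0
    refine h0.mul_bdd (c := B') ?_ (Eventually.of_forall fun q => ?_)
    · exact ((hφ1.comp (by fun_prop : Continuous fun q : Ed d × ℝ => q.1 - q.2 • z)).neg).aestronglyMeasurable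
    · simpa using hB' (q.1 - q.2 • z)
  have hprod3 : Integrable (fun q : Ed d × ℝ => φ q.1 * H (q.1 + q.2 • z)) (volume.prod ν) :=
    hprod.bdd_mul (hφcont.comp continuous_fst).aestronglyMeasurable
      (Eventually.of_forall fun q => hB _)
  have e4 : (∫ x, φ x * f (x + z)) - (∫ x, φ x * f x) =
      ∫ t in Ioc (0:ℝ) 1, ∫ y, f y * -(fderiv ℝ φ (y - t • z) z) := by
    rw [e2, ← integral_sub hφz (mulb _ hf)]
    have : (fun y => φ (y - z) * f y - φ y * f y) =
        fun y => ∫ t in Ioc (0:ℝ) 1, f y * -(fderiv ℝ φ (y - t • z) z) := by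
      ext y
      rw [integral_const_mul, ← e3 y]; ring
    rw [this]
    exact integral_integral_swap hprod2
  have e5 : ∀ t ∈ Ioc (0:ℝ) 1, ∫ y, f y * -(fderiv ℝ φ (y - t • z) z) =
      ∫ x, φ x * H (x + t • z) := by
    intro t ht
    have hfd : ∀ y, fderiv ℝ (fun y => φ (y - t • z)) y = fderiv ℝ φ (y - t • z) := by
      intro y
      simp only [sub_eq_add_neg]
      exact fderiv_comp_add_right (-(t • z))
    have := hw (fun y => φ (y - t • z)) (hφ.comp (by fun_prop))
      (hφc.comp_homeomorph (Homeomorph.subRight (t • z))) ?_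
    · simp only [hfd] at this
      simp only [mul_neg, integral_neg, this, neg_neg]
      rw [← integral_add_right_eq_self _ (t • z)]
      simp [mul_comm]
    · intro y hy
      have h1 : y - t • z ∈ tsupport φ := by
        have : tsupport (fun y => φ (y - t • z)) ⊆ (fun y => y - t • z) ⁻¹' tsupport φ := by
          apply closure_minimal
          · intro w hw
            exact subset_tsupport _ hw
          · exact (isClosed_tsupport φ).preimage (by fun_prop)
        exact this hy
      have := hz _ (hφs h1) t ⟨ht.1.le, ht.2⟩
      simpa using this
  rw [e1, e4, setIntegral_congr_fun measurableSet_Ioc e5, 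
    integral_integral_swap (f := fun (t : ℝ) (x : Ed d) => φ x * H (x + t • z)) hprod3.swap]
  simp only [integral_const_mul]
  exact sub_self _

theorem lintegral_jensen {X : Type*} [MeasurableSpace X] (ν : Measure X) [IsProbabilityMeasure ν]
    (g : X → ℝ≥0∞) (hg : AEMeasurable g ν) (r : ℝ) (hr : 1 ≤ r) :
    (∫⁻ x, g x ∂ν) ^ r ≤ ∫⁻ x, g x ^ r ∂ν := by
  have h := eLpNorm'_le_eLpNorm'_of_exponent_le (f := g) (μ := ν) one_pos hr
    hg.aestronglyMeasurable
  simp only [eLpNorm', enorm_eq_self, ENNReal.rpow_one, div_one] at h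
  calc (∫⁻ x, g x ∂ν) ^ r ≤ ((∫⁻ x, g x ^ r ∂ν) ^ (1 / r)) ^ r := by gcongr
    _ = _ := by
      rw [← ENNReal.rpow_mul, one_div, inv_mul_cancel₀ (by linarith), ENNReal.rpow_one]

theorem diffquot_scalar {d : ℕ} (U K : Set (Ed d)) (hU : MeasurableSet U) (hK : IsOpen K)
    (z : Ed d) (hz : ∀ x ∈ K, ∀ t ∈ Icc (0:ℝ) 1, x + t • z ∈ U)
    (f : Ed d → ℝ) (G : Fin d → Ed d → ℝ) (hf : IntegrableOn f U)
    (hG : ∀ i, IntegrableOn (G i) U)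
    (hw : ∀ φ : Ed d → ℝ, ContDiff ℝ (⊤ : ℕ∞) φ → HasCompactSupport φ → tsupport φ ⊆ U →
      ∀ i, ∫ x in U, f x * pder φ i x = - ∫ x in U, G i x * φ x) :
    ∫⁻ x in K, ‖f (x + z) - f x‖ₑ ^ 2 ≤
      ENNReal.ofReal (‖z‖ ^ 2) * ∫⁻ x in U, ∑ i, ‖G i x‖ₑ ^ 2 := by
  set f' := U.indicator f with hf'
  have hf'i : Integrable f' := (integrable_indicator_iff hU).2 hf
  set G' : Fin d → Ed d → ℝ := fun i => U.indicator ((hG i).1.mk (G i)) with hG'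
  have hG'i : ∀ i, Integrable (G' i) := fun i =>
    (integrable_indicator_iff hU).2 ((hG i).congr (hG i).1.ae_eq_mk)
  have hG'm : ∀ i, StronglyMeasurable (G' i) := fun i =>
    (hG i).1.stronglyMeasurable_mk.indicator hU
  have hG'e : ∀ i, ∀ᵐ x ∂(volume.restrict U), G' i x = G i x := by
    intro i
    filter_upwards [(hG i).1.ae_eq_mk, ae_restrict_mem hU] with x hx hxU
    rw [hx, hG']; simp [indicator_of_mem hxU]
  set H : Ed d → ℝ := fun x => ∑ i, z i * G' i x with hH
  have hHi : Integrable H := integrable_finsetSum _ fun i _ => (hG'i i).const_mul _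
  have hHm : StronglyMeasurable H :=
    Finset.stronglyMeasurable_fun_sum _ fun i _ => (hG'm i).const_mul _
  have hline := line_ae U K hK z hz f' H hf'i hHi hHm ?_
  swap
  · intro φ hφ hφc hφs
    obtain ⟨B, hB⟩ := hφc.exists_bound_of_continuous hφ.continuous
    have hφ1 : ∀ i, Continuous (pder φ i) := fun i =>
      (hφ.continuous_fderiv (by simp)).clm_apply continuous_const
    have hb1 : ∀ i, ∃ B', ∀ x, ‖pder φ i x‖ ≤ B' := fun i =>
      (hφc.fderiv_apply ℝ _).exists_bound_of_continuous (hφ1 i)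
    choose B' hB' using hb1
    simp only [pder_sum, hH, Finset.mul_sum, Finset.sum_mul]
    rw [integral_finsetSum, integral_finsetSum, ← Finset.sum_neg_distrib]
    · refine Finset.sum_congr rfl fun i _ => ?_
      have h1 : ∫ x, f' x * (z i * pder φ i x) = z i * ∫ x in U, f x * pder φ i x := by
        rw [← integral_const_mul, ← integral_indicator hU]
        congr 1; ext x
        by_cases hx : x ∈ U <;> simp [hf', hx]
        ring
      have h2 : ∫ x, z i * G' i x * φ x = z i * ∫ x in U, G i x * φ x := by
        rw [← integral_const_mul]
        have : ∫ x in U, z i * (G i x * φ x) = ∫ x in U, z i * (G' i x * φ x) := by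
          apply integral_congr_ae
          filter_upwards [hG'e i] with x hx
          rw [hx]
        rw [this, ← integral_indicator hU]
        congr 1; ext x
        by_cases hx : x ∈ U <;> simp [hG', hx]
        ring
      rw [h1, h2, hw φ hφ hφc hφs i]; ring
    · intro i _
      exact ((hG'i i).const_mul _).mul_bdd hφ.continuous.aestronglyMeasurable
        (Eventually.of_forall hB)
    · intro i _
      exact hf'i.mul_bdd (c := |z i| * B' i)
        ((hφ1 i).const_smul (z i) |>.aestronglyMeasurable)
        (Eventually.of_forall fun x => by
          simp only [Pi.smul_apply, norm_mul, smul_eq_mul, Real.norm_eq_abs]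
          exact mul_le_mul_of_nonneg_left (hB' i x) (abs_nonneg _))
  have hU0 : ∀ x ∈ K, x ∈ U := fun x hx => by simpa using hz x hx 0 (by simp)
  have hU1 : ∀ x ∈ K, x + z ∈ U := fun x hx => by simpa using hz x hx 1 (by simp)
  haveI : IsProbabilityMeasure (volume.restrict (Ioc (0:ℝ) 1)) := ⟨by simp⟩
  have hmeas : Measurable (fun q : Ed d × ℝ => ‖H (q.1 + q.2 • z)‖ₑ ^ 2) := by
    have : Measurable (fun q : Ed d × ℝ => q.1 + q.2 • z) := by fun_prop
    exact ((hHm.measurable.comp this).enorm).pow_const 2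
  have step1 : ∫⁻ x in K, ‖f (x + z) - f x‖ₑ ^ 2 ≤
      ∫⁻ x in K, ∫⁻ t in Ioc (0:ℝ) 1, ‖H (x + t • z)‖ₑ ^ 2 := by
    apply lintegral_mono_ae
    filter_upwards [ae_restrict_of_ae hline, ae_restrict_mem hK.measurableSet] with x hx hxK
    have h1 := hx hxK
    simp only [hf', indicator_of_mem (hU0 x hxK), indicator_of_mem (hU1 x hxK)] at h1
    rw [h1]
    have hm : Measurable (fun t : ℝ => ‖H (x + t • z)‖ₑ) := by
      have : Measurable (fun t : ℝ => x + t • z) := by fun_prop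
      exact (hHm.measurable.comp this).enorm
    have hj := lintegral_jensen (volume.restrict (Ioc (0:ℝ) 1)) _ hm.aemeasurable 2 (by norm_num)
    simp only [ENNReal.rpow_two] at hj
    refine le_trans ?_ hj
    gcongr
    exact enorm_integral_le_lintegral_enorm _
  refine step1.trans ?_
  rw [lintegral_lintegral_swap (f := fun x t => ‖H (x + t • z)‖ₑ ^ 2) hmeas.aemeasurable]
  have step2 : ∀ t : ℝ, ∫⁻ x in K, ‖H (x + t • z)‖ₑ ^ 2 ≤ ∫⁻ x, ‖H x‖ₑ ^ 2 := by
    intro t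
    refine (setLIntegral_le_lintegral _ _).trans ?_
    rw [lintegral_add_right_eq_self (fun x => ‖H x‖ₑ ^ 2) (t • z)]
  refine (lintegral_mono step2).trans ?_
  rw [lintegral_const, measure_univ, mul_one, ← lintegral_const_mul' _ _ ENNReal.ofReal_ne_top]
  have h3 : ∫⁻ x, ‖H x‖ₑ ^ 2 = ∫⁻ x in U, ‖H x‖ₑ ^ 2 := by
    rw [← lintegral_indicator hU]
    congr 1; ext x
    by_cases hx : x ∈ U <;> simp [hH, hG', hx]
  rw [h3]
  apply lintegral_mono_ae
  filter_upwards [ae_all_iff.2 hG'e] with x hx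
  have hcs := Finset.sum_mul_sq_le_sq_mul_sq Finset.univ (fun i => z i) (fun i => G i x)
  have h4 : H x = ∑ i, z i * G i x := by simp [hH, hx]
  rw [h4]
  have h5 : ∀ a : ℝ, ‖a‖ₑ ^ 2 = ENNReal.ofReal (a ^ 2) := by
    intro a
    rw [← ofReal_norm_eq_enorm, ← ENNReal.ofReal_pow (norm_nonneg _)]; simp
  simp only [h5]
  rw [← ENNReal.ofReal_sum_of_nonneg (fun i _ => sq_nonneg _),
    ← ENNReal.ofReal_mul (by positivity)]
  apply ENNReal.ofReal_le_ofReal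
  rw [EuclideanSpace.norm_sq_eq]
  simpa using hcs

theorem enorm_sq_sum {ι : Type} [Fintype ι] (x : EuclideanSpace ℝ ι) :
    ‖x‖ₑ ^ 2 = ∑ i, ‖x i‖ₑ ^ 2 := by
  simp only [← ofReal_norm_eq_enorm, ← ENNReal.ofReal_pow (norm_nonneg _)]
  rw [← ENNReal.ofReal_sum_of_nonneg (fun i _ => sq_nonneg _), EuclideanSpace.norm_sq_eq]

theorem diffquot_vec {d : ℕ} {ι : Type} [Fintype ι] (U K : Set (Ed d)) (hU : MeasurableSet U)
    (hK : IsOpen K)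
    (z : Ed d) (hz : ∀ x ∈ K, ∀ t ∈ Icc (0:ℝ) 1, x + t • z ∈ U)
    (f : Ed d → EuclideanSpace ℝ ι) (W : Ed d → EuclideanSpace ℝ (ι × Fin d))
    (hf : IntegrableOn f U) (hW : IntegrableOn W U) (hw : IsWeakGrad U f W) :
    ∫⁻ x in K, ‖f (x + z) - f x‖ₑ ^ 2 ≤
      ENNReal.ofReal (‖z‖ ^ 2) * ∫⁻ x in U, ‖W x‖ₑ ^ 2 := by
  have hfa : ∀ a, IntegrableOn (fun x => f x a) U := fun a =>
    (EuclideanSpace.proj (𝕜 := ℝ) a).integrable_comp hf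
  have hWa : ∀ a i, IntegrableOn (fun x => W x (a, i)) U := fun a i =>
    (EuclideanSpace.proj (𝕜 := ℝ) (a, i)).integrable_comp hW
  have h1 : ∀ a, ∫⁻ x in K, ‖f (x + z) a - f x a‖ₑ ^ 2 ≤
      ENNReal.ofReal (‖z‖ ^ 2) * ∫⁻ x in U, ∑ i, ‖W x (a, i)‖ₑ ^ 2 := fun a =>
    diffquot_scalar U K hU hK z hz (fun x => f x a) (fun i x => W x (a, i)) (hfa a) (hWa a)
      (fun φ h1 h2 h3 i => hw φ h1 h2 h3 a i)
  have hU0 : K ⊆ U := fun x hx => by simpa using hz x hx 0 (by simp)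
  have hU1 : ∀ x ∈ K, x + z ∈ U := fun x hx => by simpa using hz x hx 1 (by simp)
  have hm1 : ∀ a, AEMeasurable (fun x => ‖f (x + z) a - f x a‖ₑ ^ 2) (volume.restrict K) := by
    intro a
    have hA : IntegrableOn (fun x => f (x + z) a) K := by
      have := (integrable_indicator_iff hU).2 (hfa a)
      have := (this.comp_add_right z).integrableOn (s := K)
      refine this.congr_fun ?_ hK.measurableSet
      intro x hx
      simp [indicator_of_mem (hU1 x hx)]
    exact ((hA.1.sub ((hfa a).mono_set hU0).1).enorm).pow_const 2
  have hm2 : ∀ a, AEMeasurable (fun x => ∑ i, ‖W x (a, i)‖ₑ ^ 2) (volume.restrict U) := by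
    intro a
    exact Finset.aemeasurable_fun_sum _ fun i _ => ((hWa a i).1.enorm).pow_const 2
  simp only [enorm_sq_sum, PiLp.sub_apply, Fintype.sum_prod_type]
  rw [lintegral_finset_sum' _ fun a _ => hm1 a, lintegral_finset_sum' _ fun a _ => hm2 a,
    Finset.mul_sum]
  exact Finset.sum_le_sum fun a _ => h1 a

theorem pder_zero_off {d : ℕ} (φ : Ed d → ℝ) (i : Fin d) (x : Ed d) (hx : x ∉ tsupport φ) :
    pder φ i x = 0 := by
  have : fderiv ℝ φ x = 0 := by
    by_contra h
    exact hx (support_fderiv_subset ℝ h)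
  simp [pder, this]

theorem IsWeakGrad_mono {d : ℕ} {ι : Type} [Fintype ι] {U U' : Set (Ed d)} (hU : MeasurableSet U)
    (hs : U' ⊆ U) {f : Ed d → EuclideanSpace ℝ ι} {g : Ed d → EuclideanSpace ℝ (ι × Fin d)}
    (h : IsWeakGrad U f g) : IsWeakGrad U' f g := by
  intro φ h1 h2 h3 a i
  have := h φ h1 h2 (h3.trans hs) a i
  rw [setIntegral_eq_of_subset_of_forall_diff_eq_zero hU hs,
    setIntegral_eq_of_subset_of_forall_diff_eq_zero hU hs] at this
  · exact this
  · intro x hx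
    rw [image_eq_zero_of_notMem_tsupport (fun h => hx.2 (h3 h)), mul_zero]
  · intro x hx
    rw [pder_zero_off φ i x (fun h => hx.2 (h3 h)), mul_zero]

theorem IsWeakGrad_congr {d : ℕ} {ι : Type} [Fintype ι] {U : Set (Ed d)}
    {f f' : Ed d → EuclideanSpace ℝ ι} {g g' : Ed d → EuclideanSpace ℝ (ι × Fin d)}
    (hf : f =ᵐ[volume.restrict U] f') (hg : g =ᵐ[volume.restrict U] g')
    (h : IsWeakGrad U f g) : IsWeakGrad U f' g' := by
  intro φ h1 h2 h3 a i
  have := h φ h1 h2 h3 a i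
  have e1 : ∫ x in U, f x a * pder φ i x = ∫ x in U, f' x a * pder φ i x := by
    apply integral_congr_ae
    filter_upwards [hf] with x hx
    rw [hx]
  have e2 : ∫ x in U, g x (a, i) * φ x = ∫ x in U, g' x (a, i) * φ x := by
    apply integral_congr_ae
    filter_upwards [hg] with x hx
    rw [hx]
  rw [← e1, ← e2, this]

/-- A normalized bump. -/
structure IsBump {d : ℕ} (ψ : Ed d → ℝ) : Prop where
  smooth : ContDiff ℝ (⊤ : ℕ∞) ψ
  cs : HasCompactSupport ψ
  supp : tsupport ψ ⊆ closedBall 0 1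
  nonneg : ∀ x, 0 ≤ ψ x
  int : ∫ x, ψ x = 1

theorem exists_bump (d : ℕ) : ∃ ψ : Ed d → ℝ, IsBump ψ := by
  let b : ContDiffBump (0 : Ed d) := ⟨1/2, 1, by norm_num, by norm_num⟩
  refine ⟨b.normed volume, b.contDiff_normed, b.hasCompactSupport_normed, ?_,
    b.nonneg_normed, b.integral_normed⟩
  rw [b.tsupport_normed_eq]

theorem IsBump.pder_int {d : ℕ} {ψ : Ed d → ℝ} (hψ : IsBump ψ) (i : Fin d) :
    Integrable (pder ψ i) := by
  have hc : Continuous (pder ψ i) :=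
      (hψ.smooth.continuous_fderiv (by simp)).clm_apply continuous_const
  exact hc.integrable_of_hasCompactSupport (hψ.cs.fderiv_apply ℝ _)

theorem IsBump.pder_int_zero {d : ℕ} {ψ : Ed d → ℝ} (hψ : IsBump ψ) (i : Fin d) :
    ∫ x, pder ψ i x = 0 := by
  have := integral_mul_fderiv_eq_neg_fderiv_mul_of_integrable (μ := (volume : Measure (Ed d)))
    (f := fun _ => (1:ℝ)) (g := ψ) (v := EuclideanSpace.single i 1) (by simp)
    (by simp only [one_mul]; exact hψ.pder_int i)
    (by simpa using hψ.smooth.continuous.integrable_of_hasCompactSupport hψ.cs)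
    (fun x _ => by fun_prop) (fun x _ => hψ.smooth.differentiable (by simp) x)
  simpa [pder] using this

theorem integral_affine {d : ℕ} (Φ : Ed d → ℝ) (x : Ed d) (r : ℝ) (hr : 0 < r) :
    ∫ z, Φ (x + r • z) = (r ^ d)⁻¹ * ∫ y, Φ y := by
  have := Measure.integral_comp_smul (volume : Measure (Ed d)) (fun w => Φ (x + w)) r
  rw [this, integral_add_left_eq_self Φ x]
  simp [abs_of_pos hr]

theorem integrable_affine {d : ℕ} {F : Type*} [NormedAddCommGroup F] (Φ : Ed d → F) (x : Ed d) (r : ℝ) (hr : 0 < r)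
    (h : Integrable Φ) : Integrable (fun z => Φ (x + r • z)) :=
  (h.comp_add_left x).comp_smul hr.ne'

theorem osc_lemma {d N : ℕ} {ψ : Ed d → ℝ} (hψ : IsBump ψ) (U : Set (Ed d))
    (hU : MeasurableSet U)
    (u v : Ed d → En N) (g : Ed d → Mat N d) (hu : IntegrableOn u U)
    (hug : IsWeakGrad U u g) (huv : u =ᵐ[volume.restrict U] v) (x : Ed d) (r ω : ℝ) (hr : 0 < r)
    (hball : closedBall x r ⊆ U) (hω : ∀ y ∈ closedBall x r, ‖v y - v x‖ ≤ ω)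
    (a : Fin N) (i : Fin d) :
    |∫ z, ψ z * g (x + r • z) (a, i)| ≤ ω / r * ∫ z, |pder ψ i z| := by
  have hvg := IsWeakGrad_congr huv (ae_eq_refl g) hug
  have hv : IntegrableOn v U := hu.congr huv
  have hva : IntegrableOn (fun x => v x a) U := (EuclideanSpace.proj (𝕜 := ℝ) a).integrable_comp hv
  set φ : Ed d → ℝ := fun y => ψ (r⁻¹ • (y - x)) with hφ
  have hinv : ∀ z, r⁻¹ • (x + r • z - x) = z := by
    intro z
    rw [add_sub_cancel_left, smul_smul, inv_mul_cancel₀ hr.ne', one_smul]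
  have hφs : ContDiff ℝ (⊤ : ℕ∞) φ := hψ.smooth.comp (by fun_prop)
  have hts : tsupport φ ⊆ closedBall x r := by
    apply closure_minimal _ isClosed_closedBall
    intro y hy
    have h1 : r⁻¹ • (y - x) ∈ closedBall (0 : Ed d) 1 := hψ.supp (subset_tsupport _ hy)
    rw [mem_closedBall_zero_iff, norm_smul, norm_inv, Real.norm_of_nonneg hr.le,
      inv_mul_le_iff₀ hr, mul_one] at h1
    rw [mem_closedBall, dist_eq_norm]; exact h1
  have hcs : HasCompactSupport φ :=
    (isCompact_closedBall x r).of_isClosed_subset (isClosed_tsupport φ) hts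
  have hpd : ∀ y, pder φ i y = r⁻¹ * pder ψ i (r⁻¹ • (y - x)) := by
    intro y
    have h1 : HasFDerivAt ψ (fderiv ℝ ψ (r⁻¹ • (y - x))) (r⁻¹ • (y - x)) :=
      (hψ.smooth.differentiable (by simp) _).hasFDerivAt
    have h2 : HasFDerivAt (fun y : Ed d => r⁻¹ • (y - x)) (r⁻¹ • ContinuousLinearMap.id ℝ (Ed d)) y :=
      ((hasFDerivAt_id y).sub_const x).const_smul r⁻¹
    have h3 := (h1.comp y h2).fderiv
    have h4 : fderiv ℝ φ y = (fderiv ℝ ψ (r⁻¹ • (y - x))).comp (r⁻¹ • ContinuousLinearMap.id ℝ (Ed d)) := h3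
    simp [pder, h4]
  have key := hvg φ hφs hcs (hts.trans hball) a i
  have hoff1 : ∀ y, y ∉ U → g y (a, i) * φ y = 0 := fun y hy => by
    rw [image_eq_zero_of_notMem_tsupport (fun h => hy (hball (hts h))), mul_zero]
  have hoff2 : ∀ y, y ∉ U → v y a * pder φ i y = 0 := fun y hy => by
    rw [pder_zero_off φ i y (fun h => hy (hball (hts h))), mul_zero]
  rw [setIntegral_eq_integral_of_forall_compl_eq_zero hoff1,
    setIntegral_eq_integral_of_forall_compl_eq_zero hoff2] at key
  have e1 : ∫ z, ψ z * g (x + r • z) (a, i) = (r ^ d)⁻¹ * ∫ y, g y (a, i) * φ y := by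
    rw [← integral_affine _ x r hr]
    congr 1; ext z
    simp only [hφ, hinv]; ring
  have e2 : ∫ z, v (x + r • z) a * (r⁻¹ * pder ψ i z) = (r ^ d)⁻¹ * ∫ y, v y a * pder φ i y := by
    rw [← integral_affine _ x r hr]
    congr 1; ext z
    simp only [hpd, hinv]
  have hpc : Continuous (pder φ i) :=
      (hφs.continuous_fderiv (by simp)).clm_apply continuous_const
  obtain ⟨B, hB⟩ := (hcs.fderiv_apply ℝ (EuclideanSpace.single i 1)).exists_bound_of_continuous hpc
  have hint : Integrable (fun y => v y a * pder φ i y) := by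
    rw [← integrableOn_iff_integrable_of_support_subset (s := U)]
    · exact hva.mul_bdd hpc.aestronglyMeasurable (Eventually.of_forall hB)
    · intro y hy
      by_contra h
      exact hy (hoff2 y h)
  have hint2 : Integrable (fun z => v (x + r • z) a * (r⁻¹ * pder ψ i z)) := by
    have := integrable_affine _ x r hr hint
    simp only [hpd, hinv] at this
    exact this
  have hint3 : Integrable (fun z => v x a * (r⁻¹ * pder ψ i z)) :=
    ((hψ.pder_int i).const_mul _).const_mul _
  have e3 : ∫ z, ψ z * g (x + r • z) (a, i) =
      - ∫ z, (v (x + r • z) a - v x a) * (r⁻¹ * pder ψ i z) := by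
    have : ∫ z, v x a * (r⁻¹ * pder ψ i z) = 0 := by
      rw [integral_const_mul, integral_const_mul, hψ.pder_int_zero]; simp
    simp only [sub_mul]
    rw [integral_sub hint2 hint3, this, sub_zero, e2, e1, key]
    ring
  rw [e3, abs_neg, ← Real.norm_eq_abs, ← integral_const_mul]
  apply norm_integral_le_of_norm_le ((hψ.pder_int i).abs.const_mul _)
  refine Eventually.of_forall fun z => ?_
  by_cases hz : z ∈ tsupport ψ
  · have hz1 : x + r • z ∈ closedBall x r := by
      have := hψ.supp hz
      rw [mem_closedBall_zero_iff] at this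
      rw [mem_closedBall, dist_eq_norm, add_sub_cancel_left, norm_smul, Real.norm_of_nonneg hr.le]
      exact mul_le_of_le_one_right hr.le this
    have h1 : |v (x + r • z) a - v x a| ≤ ω := by
      refine le_trans ?_ (hω _ hz1)
      simpa using PiLp.norm_apply_le (v (x + r • z) - v x) a
    rw [norm_mul, norm_mul, norm_inv, Real.norm_of_nonneg hr.le, Real.norm_eq_abs, Real.norm_eq_abs]
    calc _ ≤ ω * (r⁻¹ * |pder ψ i z|) := by gcongr
      _ = _ := by ring
  · rw [pder_zero_off ψ i z hz]; simp

/-- The probability measure with density `ψ`. -/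
def bmeas {d : ℕ} (ψ : Ed d → ℝ) : Measure (Ed d) :=
  volume.withDensity (fun z => ENNReal.ofReal (ψ z))

theorem bmeas_prob {d : ℕ} {ψ : Ed d → ℝ} (hψ : IsBump ψ) : IsProbabilityMeasure (bmeas ψ) := by
  constructor
  rw [bmeas, withDensity_apply _ MeasurableSet.univ, Measure.restrict_univ,
    ← ofReal_integral_eq_lintegral_ofReal
      (hψ.smooth.continuous.integrable_of_hasCompactSupport hψ.cs)
      (Eventually.of_forall hψ.nonneg), hψ.int, ENNReal.ofReal_one]

theorem bmeas_ae {d : ℕ} {ψ : Ed d → ℝ} (hψ : IsBump ψ) : ∀ᵐ z ∂(bmeas ψ), ‖z‖ ≤ 1 := by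
  have hm : Measurable (fun z => ENNReal.ofReal (ψ z)) :=
    hψ.smooth.continuous.measurable.ennreal_ofReal
  rw [bmeas, ae_withDensity_iff hm]
  refine Eventually.of_forall fun z hz => ?_
  have : z ∈ tsupport ψ := by
    apply subset_tsupport
    intro h
    exact hz (by rw [h]; simp)
  simpa using hψ.supp this

theorem bmeas_integral {d : ℕ} {ψ : Ed d → ℝ} (hψ : IsBump ψ) (F : Ed d → ℝ) :
    ∫ z, F z ∂(bmeas ψ) = ∫ z, ψ z * F z := by
  have hm : Measurable (fun z => ENNReal.ofReal (ψ z)) :=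
    hψ.smooth.continuous.measurable.ennreal_ofReal
  rw [bmeas, integral_withDensity_eq_integral_toReal_smul hm
    (Eventually.of_forall fun _ => ENNReal.ofReal_lt_top)]
  simp [ENNReal.toReal_ofReal (hψ.nonneg _)]

theorem bmeas_integrable {d : ℕ} {F : Type*} [NormedAddCommGroup F] [NormedSpace ℝ F]
    {ψ : Ed d → ℝ} (hψ : IsBump ψ) (Φ : Ed d → F)
    (h : Integrable Φ) : Integrable Φ (bmeas ψ) := by
  have hm : Measurable (fun z => ENNReal.ofReal (ψ z)) :=
    hψ.smooth.continuous.measurable.ennreal_ofReal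
  obtain ⟨B, hB⟩ := hψ.cs.exists_bound_of_continuous hψ.smooth.continuous
  rw [bmeas, integrable_withDensity_iff_integrable_smul' hm
    (Eventually.of_forall fun _ => ENNReal.ofReal_lt_top)]
  simp only [ENNReal.toReal_ofReal (hψ.nonneg _)]
  exact h.bdd_smul B hψ.smooth.continuous.aestronglyMeasurable (Eventually.of_forall hB)

theorem norm_le_sum_abs {ι : Type} [Fintype ι] (x : EuclideanSpace ℝ ι) :
    ‖x‖ ≤ ∑ i, |x i| := by
  have h1 : ‖x‖ ^ 2 ≤ (∑ i, |x i|) ^ 2 := by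
    rw [EuclideanSpace.norm_sq_eq]
    simp only [Real.norm_eq_abs]
    exact Finset.sum_sq_le_sq_sum_of_nonneg fun i _ => abs_nonneg _
  exact le_of_sq_le_sq h1 (Finset.sum_nonneg fun i _ => abs_nonneg _)

theorem enorm_rpow_Vm {ι : Type} [Fintype ι] (p : ℝ) (hp : 2 ≤ p) (a b : EuclideanSpace ℝ ι) :
    ‖a - b‖ₑ ^ p ≤ ENNReal.ofReal (2 ^ p) * ‖Vm p a - Vm p b‖ₑ ^ 2 := by
  rw [← ofReal_norm, ← ofReal_norm, ENNReal.ofReal_rpow_of_nonneg (norm_nonneg _) (by linarith),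
    ← ENNReal.ofReal_pow (norm_nonneg _), ← ENNReal.ofReal_mul (by positivity)]
  exact ENNReal.ofReal_le_ofReal (Vm_ineq p hp a b)

theorem level_lemma {d N : ℕ} {ψ : Ed d → ℝ} (hψ : IsBump ψ) (p : ℝ) (hp : 2 ≤ p)
    (c : Ed d) (ρ r : ℝ) (hr : 0 < r) (hrρ : r ≤ ρ / 4)
    (g : Ed d → Mat N d) (hgm : StronglyMeasurable g) (hg : IntegrableOn g (cube c ρ))
    (W : Ed d → EuclideanSpace ℝ ((Fin N × Fin d) × Fin d))
    (hV : IntegrableOn (fun x => Vm p (g x)) (cube c ρ)) (hW : IntegrableOn W (cube c ρ))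
    (hVW : IsWeakGrad (cube c ρ) (fun x => Vm p (g x)) W)
    (lam : ℝ) (hl : 0 < lam)
    (hosc : ∀ x ∈ cube c (ρ / 2), ∀ a i, |∫ z, ψ z * g (x + r • z) (a, i)| ≤ lam / 2 / (N * d + 1)) :
    ENNReal.ofReal (lam / 2) ^ p * volume {x | x ∈ cube c (ρ / 2) ∧ lam < ‖g x‖} ≤
      ENNReal.ofReal (2 ^ p) * (ENNReal.ofReal (r ^ 2) * ∫⁻ x in cube c ρ, ‖W x‖ₑ ^ 2) := by
  set m := bmeas ψ with hm
  have := bmeas_prob hψ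
  set K := cube c (ρ / 2) with hK
  set U := cube c ρ with hU
  set V : Ed d → Mat N d := fun x => Vm p (g x) with hVdef
  have hVm : StronglyMeasurable V := (Vm_continuous p hp).comp_stronglyMeasurable hgm
  have hmeas : Measurable (fun q : Ed d × Ed d => ‖V (q.1 + r • q.2) - V q.1‖ₑ ^ 2) := by
    have h1 : Measurable (fun q : Ed d × Ed d => q.1 + r • q.2) := by fun_prop
    have h2 : Measurable (fun q : Ed d × Ed d => q.1) := by fun_prop
    exact (((hVm.measurable.comp h1).sub (hVm.measurable.comp h2)).enorm).pow_const 2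
  set F : Ed d → ℝ≥0∞ := fun x => ENNReal.ofReal (2 ^ p) * ∫⁻ z, ‖V (x + r • z) - V x‖ₑ ^ 2 ∂m
    with hF
  have hFm : Measurable F := (hmeas.lintegral_prod_right' (ν := m)).const_mul _
  -- pointwise estimate
  have hpt : ∀ x ∈ K, lam < ‖g x‖ → ENNReal.ofReal (lam / 2) ^ p ≤ F x := by
    intro x hx hgx
    have hsh : ∀ z : Ed d, ‖z‖ ≤ 1 → x + r • z ∈ U := by
      intro z hz
      apply cube_shift c (ρ / 2) ρ x _ hx
      rw [norm_smul, Real.norm_of_nonneg hr.le]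
      nlinarith
    have hgi : Integrable (fun z => g (x + r • z)) m := by
      have h1 : Integrable (U.indicator g) := (integrable_indicator_iff (cube_meas c ρ)).2 hg
      have h2 := bmeas_integrable hψ _ (integrable_affine _ x r hr h1)
      refine h2.congr ?_
      filter_upwards [bmeas_ae hψ] with z hz
      rw [indicator_of_mem (hsh z hz)]
    have havg : ‖∫ z, g (x + r • z) ∂m‖ ≤ lam / 2 := by
      refine (norm_le_sum_abs _).trans ?_
      have hcomp : ∀ q : Fin N × Fin d, (∫ z, g (x + r • z) ∂m) q = ∫ z, ψ z * g (x + r • z) q := by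
        intro q
        rw [← bmeas_integral hψ]
        exact ((EuclideanSpace.proj (𝕜 := ℝ) q).integral_comp_comm hgi).symm
      simp only [hcomp]
      calc _ ≤ ∑ q : Fin N × Fin d, lam / 2 / (N * d + 1) :=
            Finset.sum_le_sum fun q _ => hosc x hx q.1 q.2
        _ = (N * d) * (lam / 2 / (N * d + 1)) := by simp
        _ ≤ (N * d + 1) * (lam / 2 / (N * d + 1)) := by gcongr; linarith
        _ = _ := by field_simp
    have h1 : ENNReal.ofReal (lam / 2) ≤ ∫⁻ z, ‖g (x + r • z) - g x‖ₑ ∂m := by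
      refine le_trans ?_ (enorm_integral_le_lintegral_enorm _)
      rw [integral_sub hgi (integrable_const _), integral_const, probReal_univ, one_smul,
        ← ofReal_norm]
      apply ENNReal.ofReal_le_ofReal
      have := norm_sub_norm_le (g x) (∫ z, g (x + r • z) ∂m)
      rw [norm_sub_rev] at this
      linarith
    have hmg : Measurable (fun z => ‖g (x + r • z) - g x‖ₑ) := by
      have h1 : Measurable (fun z : Ed d => x + r • z) := by fun_prop
      exact ((hgm.measurable.comp h1).sub measurable_const).enorm
    calc ENNReal.ofReal (lam / 2) ^ p ≤ (∫⁻ z, ‖g (x + r • z) - g x‖ₑ ∂m) ^ p := by gcongr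
      _ ≤ ∫⁻ z, ‖g (x + r • z) - g x‖ₑ ^ p ∂m :=
        lintegral_jensen m _ hmg.aemeasurable p (by linarith)
      _ ≤ ∫⁻ z, ENNReal.ofReal (2 ^ p) * ‖V (x + r • z) - V x‖ₑ ^ 2 ∂m :=
        lintegral_mono fun z => enorm_rpow_Vm p hp _ _
      _ = F x := by rw [hF, lintegral_const_mul' _ _ ENNReal.ofReal_ne_top]
  have hcheb : ENNReal.ofReal (lam / 2) ^ p * volume {x | x ∈ K ∧ lam < ‖g x‖} ≤
      ∫⁻ x in K, F x := by
    have h1 := mul_meas_ge_le_lintegral₀ (μ := volume.restrict K) hFm.aemeasurable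
      (ENNReal.ofReal (lam / 2) ^ p)
    refine le_trans ?_ h1
    refine mul_le_mul_right ?_ _
    rw [Measure.restrict_apply (measurableSet_le measurable_const hFm)]
    apply measure_mono
    rintro x ⟨hx, hx2⟩
    exact ⟨hpt x hx hx2, hx⟩
  refine hcheb.trans ?_
  rw [hF, lintegral_const_mul' _ _ ENNReal.ofReal_ne_top]
  gcongr
  rw [lintegral_lintegral_swap hmeas.aemeasurable]
  calc ∫⁻ z, (∫⁻ x in K, ‖V (x + r • z) - V x‖ₑ ^ 2) ∂m
      ≤ ∫⁻ _, (ENNReal.ofReal (r ^ 2) * ∫⁻ x in U, ‖W x‖ₑ ^ 2) ∂m := by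
        apply lintegral_mono_ae
        filter_upwards [bmeas_ae hψ] with z hz
        have hnz : ‖r • z‖ ≤ r := by
          rw [norm_smul, Real.norm_of_nonneg hr.le]
          nlinarith
        refine (diffquot_vec U K (cube_meas c ρ) (cube_isOpen _ _) (r • z) ?_ V W hV hW hVW).trans ?_
        · intro x hx t ht
          apply cube_shift c (ρ / 2) ρ x _ hx
          rw [norm_smul, Real.norm_of_nonneg ht.1]
          have : t * ‖r • z‖ ≤ 1 * r := mul_le_mul ht.2 hnz (norm_nonneg _) (by norm_num)
          linarith
        · gcongr
    _ = _ := by rw [lintegral_const, measure_univ, mul_one]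

theorem layer_bound {X : Type*} [MeasurableSpace X] (μ : Measure X) (f : X → ℝ)
    (hf0 : ∀ x, 0 ≤ f x) (hfm : AEMeasurable f μ) (A L M M0 s q : ℝ) (hA : 0 < A) (hL : 0 < L)
    (hM : 0 ≤ M) (hM0 : 0 ≤ M0) (hq : 0 < q) (hqs : q < s)
    (h0 : μ univ ≤ ENNReal.ofReal M0)
    (h : ∀ t, L * A ≤ t → μ {x | t < f x} ≤ ENNReal.ofReal (M * (t / A) ^ (-s))) :
    ∫⁻ x, ENNReal.ofReal (f x ^ q) ∂μ ≤
      ENNReal.ofReal ((M0 * L ^ q + M * q * L ^ (q - s) / (s - q)) * A ^ q) := by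
  rw [lintegral_rpow_eq_lintegral_meas_lt_mul μ (Eventually.of_forall hf0) hfm hq]
  set T := L * A with hT
  have hT0 : 0 < T := by positivity
  have hsplit : Ioi (0:ℝ) = Ioc 0 T ∪ Ioi T := (Ioc_union_Ioi_eq_Ioi hT0.le).symm
  have hI1 : ∫⁻ t in Ioc 0 T, μ {x | t < f x} * ENNReal.ofReal (t ^ (q - 1)) ≤
      ENNReal.ofReal (M0 * (T ^ q / q)) := by
    calc _ ≤ ∫⁻ t in Ioc 0 T, ENNReal.ofReal M0 * ENNReal.ofReal (t ^ (q - 1)) := by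
          apply lintegral_mono
          intro t
          dsimp only
          gcongr
          exact (measure_mono (subset_univ _)).trans h0
      _ = ENNReal.ofReal M0 * ENNReal.ofReal (∫ t in Ioc 0 T, t ^ (q - 1)) := by
          rw [lintegral_const_mul' _ _ ENNReal.ofReal_ne_top, ofReal_integral_eq_lintegral_ofReal]
          · have := intervalIntegral.intervalIntegrable_rpow' (a := 0) (b := T) (r := q - 1) (by linarith)
            exact (intervalIntegrable_iff_integrableOn_Ioc_of_le hT0.le).1 this
          · filter_upwards [ae_restrict_mem measurableSet_Ioc] with t ht
            exact Real.rpow_nonneg ht.1.le _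
      _ = _ := by
          rw [← intervalIntegral.integral_of_le hT0.le, integral_rpow (Or.inl (by linarith)),
            ← ENNReal.ofReal_mul hM0]
          simp [hq.ne']
  have hI2 : ∫⁻ t in Ioi T, μ {x | t < f x} * ENNReal.ofReal (t ^ (q - 1)) ≤
      ENNReal.ofReal (M * A ^ s * (T ^ (q - s) / (s - q))) := by
    calc _ ≤ ∫⁻ t in Ioi T, ENNReal.ofReal (M * A ^ s) * ENNReal.ofReal (t ^ (q - s - 1)) := by
          apply setLIntegral_mono' measurableSet_Ioi
          intro t ht
          have ht0 : 0 < t := hT0.trans ht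
          calc _ ≤ ENNReal.ofReal (M * (t / A) ^ (-s)) * ENNReal.ofReal (t ^ (q - 1)) := by
                gcongr
                exact h t (le_of_lt ht)
            _ = _ := by
                rw [← ENNReal.ofReal_mul (by positivity), ← ENNReal.ofReal_mul (by positivity)]
                congr 1
                rw [Real.div_rpow ht0.le hA.le, Real.rpow_neg hA.le s, div_inv_eq_mul,
                  show q - s - 1 = -s + (q - 1) by ring, Real.rpow_add ht0]
                ring
      _ = ENNReal.ofReal (M * A ^ s) * ENNReal.ofReal (∫ t in Ioi T, t ^ (q - s - 1)) := by
          rw [lintegral_const_mul' _ _ ENNReal.ofReal_ne_top, ofReal_integral_eq_lintegral_ofReal]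
          · exact integrableOn_Ioi_rpow_of_lt (by linarith) hT0
          · filter_upwards [ae_restrict_mem measurableSet_Ioi] with t ht
            exact Real.rpow_nonneg (hT0.trans ht).le _
      _ = _ := by
          rw [integral_Ioi_rpow_of_lt (by linarith) hT0, ← ENNReal.ofReal_mul (by positivity)]
          congr 2
          rw [sub_add_cancel, ← neg_sub s q, div_neg, neg_div, neg_neg, neg_sub]
  rw [hsplit, lintegral_union measurableSet_Ioi (Ioc_disjoint_Ioi le_rfl)]
  calc _ ≤ ENNReal.ofReal q * (ENNReal.ofReal (M0 * (T ^ q / q)) +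
        ENNReal.ofReal (M * A ^ s * (T ^ (q - s) / (s - q)))) := by gcongr
    _ = _ := by
      have hsq : 0 < s - q := by linarith
      rw [← ENNReal.ofReal_add (by positivity) (by positivity), ← ENNReal.ofReal_mul hq.le]
      congr 1
      rw [hT, Real.mul_rpow hL.le hA.le, Real.mul_rpow hL.le hA.le]
      have : A ^ q = A ^ s * A ^ (q - s) := by rw [← Real.rpow_add hA]; congr 1; ring
      field_simp
      rw [this]
      ring

theorem subcube {d N : ℕ} {ψ : Ed d → ℝ} (hψ : IsBump ψ) (p α c₁ c₂ : ℝ) (hp : 2 ≤ p)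
    (hα : α ∈ Set.Ioo (0 : ℝ) 1) (hc₁ : 0 < c₁) (hc₂ : 0 < c₂)
    (B : ℝ) (hB0 : 0 < B) (hB : ∀ i, ∫ z, |pder ψ i z| ≤ B)
    (U : Set (Ed d)) (hUm : MeasurableSet U)
    (u v : Ed d → En N) (g : Ed d → Mat N d)
    (W : Ed d → EuclideanSpace ℝ ((Fin N × Fin d) × Fin d))
    (hgm : StronglyMeasurable g)
    (hu : IntegrableOn u U) (hug : IsWeakGrad U u g) (hg : IntegrableOn g U)
    (hV : IntegrableOn (fun x => Vm p (g x)) U)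
    (hVW : IsWeakGrad U (fun x => Vm p (g x)) W)
    (huv : u =ᵐ[volume.restrict U] v)
    (c : Ed d) (ρ : ℝ) (hρ : 0 < ρ) (hsub : cube c ρ ⊆ U)
    (A κ m : ℝ) (hA : 0 < A) (hκ : 0 < κ) (hm : 0 ≤ m)
    (hW2 : MemLp W 2 (volume.restrict (cube c ρ)))
    (hW : ∫⁻ x in cube c ρ, ‖W x‖ₑ ^ 2 ≤ ENNReal.ofReal (c₁ / ρ ^ 2) * ENNReal.ofReal (m * A ^ p))
    (hH : ∀ x ∈ cube c ρ, ∀ y ∈ cube c ρ, ‖v x - v y‖ ≤ c₂ * ρ ^ (1 - α) * (κ * A) * dist x y ^ α)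
    (E : ℝ) (hE : E = 2 * (N * d + 1) * c₂ * κ * B) (lam : ℝ) (hl : 4 * E * A ≤ lam) :
    volume {x | x ∈ cube c (ρ / 2) ∧ lam < ‖g x‖} ≤
      ENNReal.ofReal (4 ^ p * c₁ * m * E ^ (2 / (1 - α)) * (lam / A) ^ (-(p + 2 / (1 - α)))) := by
  have hα1 : 0 < 1 - α := by linarith [hα.2]
  have hE0 : 0 < E := by rw [hE]; positivity
  have hl0 : 0 < lam := lt_of_lt_of_le (by positivity) hl
  set τ := lam / (E * A) with hτ
  have hτ4 : 4 ≤ τ := by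
    rw [hτ, le_div_iff₀ (by positivity)]; linarith
  have hτ0 : 0 < τ := by linarith
  set θ := τ ^ (-(1 / (1 - α))) with hθ
  have hθ0 : 0 < θ := Real.rpow_pos_of_pos hτ0 _
  have hθ4 : θ ≤ 1 / 4 := by
    have h1 : τ ^ (-(1 / (1 - α))) ≤ τ ^ (-1 : ℝ) := by
      apply Real.rpow_le_rpow_of_exponent_le (by linarith)
      have : 1 ≤ 1 / (1 - α) := by rw [le_div_iff₀ hα1]; linarith [hα.1]
      linarith
    refine h1.trans ?_
    rw [Real.rpow_neg_one, ← one_div]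
    exact one_div_le_one_div_of_le (by norm_num) hτ4
  have hθα : θ ^ (α - 1) = τ := by
    rw [hθ, ← Real.rpow_mul hτ0.le]
    have : -(1 / (1 - α)) * (α - 1) = 1 := by field_simp; ring
    rw [this, Real.rpow_one]
  have hθ2 : θ ^ 2 = τ ^ (-(2 / (1 - α))) := by
    rw [hθ, ← Real.rpow_mul_natCast hτ0.le]
    congr 1; push_cast; ring
  set r := ρ * θ with hr
  have hr0 : 0 < r := by positivity
  have hr4 : r ≤ ρ / 4 := by rw [hr]; nlinarith
  have hosc : ∀ x ∈ cube c (ρ / 2), ∀ a i,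
      |∫ z, ψ z * g (x + r • z) (a, i)| ≤ lam / 2 / (N * d + 1) := by
    intro x hx a i
    have hball : closedBall x r ⊆ cube c ρ := by
      intro y hy
      rw [mem_closedBall, dist_eq_norm] at hy
      have := cube_shift c (ρ / 2) ρ x (y - x) hx (by linarith)
      simpa using this
    have h1 := osc_lemma hψ U hUm u v g hu hug huv x r (c₂ * ρ ^ (1 - α) * (κ * A) * r ^ α) hr0
      (hball.trans hsub) ?_ a i
    · refine h1.trans ?_
      have h2 : c₂ * ρ ^ (1 - α) * (κ * A) * r ^ α / r = c₂ * κ * A * τ := by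
        rw [← hθα, hr, Real.mul_rpow hρ.le hθ0.le, Real.rpow_sub hρ, Real.rpow_sub hθ0,
          Real.rpow_one, Real.rpow_one]
        field_simp
      rw [h2]
      calc c₂ * κ * A * τ * ∫ z, |pder ψ i z| ≤ c₂ * κ * A * τ * B := by
            gcongr; exact hB i
        _ = lam / 2 / (N * d + 1) := by
            rw [hτ, hE]; field_simp
    · intro y hy
      have h3 := hH y (hball hy) x (hball (mem_closedBall_self hr0.le))
      refine h3.trans ?_
      rw [mem_closedBall] at hy
      have := hα.1
      gcongr
  have hWi : IntegrableOn W (cube c ρ) := by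
    have : IsFiniteMeasure (volume.restrict (cube c ρ)) := ⟨by
      rw [Measure.restrict_apply_univ]; exact cube_vol_lt c ρ⟩
    exact hW2.integrable (by norm_num)
  have hlev := level_lemma hψ p hp c ρ r hr0 hr4 g hgm (hg.mono_set hsub) W (hV.mono_set hsub) hWi
    (IsWeakGrad_mono hUm hsub hVW) lam hl0 hosc
  have h5 : ENNReal.ofReal (lam / 2) ^ p * volume {x | x ∈ cube c (ρ / 2) ∧ lam < ‖g x‖} ≤
      ENNReal.ofReal (2 ^ p * (r ^ 2 * (c₁ / ρ ^ 2 * (m * A ^ p)))) := by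
    refine hlev.trans ?_
    rw [ENNReal.ofReal_mul (by positivity), ENNReal.ofReal_mul (by positivity),
      ENNReal.ofReal_mul (by positivity)]
    gcongr
  rw [ENNReal.ofReal_rpow_of_pos (by positivity)] at h5
  have hpos : 0 < (lam / 2) ^ p := by positivity
  rw [mul_comm, ← ENNReal.le_div_iff_mul_le (Or.inl (by simpa using hpos))
    (Or.inl ENNReal.ofReal_ne_top), ← ENNReal.ofReal_div_of_pos hpos] at h5
  refine h5.trans (le_of_eq ?_)
  congr 1
  have e1 : r ^ 2 * (c₁ / ρ ^ 2 * (m * A ^ p)) = θ ^ 2 * c₁ * m * A ^ p := by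
    rw [hr]; field_simp
  have e2 : θ ^ 2 = E ^ (2 / (1 - α)) * (lam / A) ^ (-(2 / (1 - α))) := by
    rw [hθ2, hτ, show lam / (E * A) = E⁻¹ * (lam / A) by field_simp,
      Real.mul_rpow (by positivity) (by positivity), Real.inv_rpow hE0.le, Real.rpow_neg hE0.le,
      inv_inv]
  have e3 : (lam / A) ^ (-(p + 2 / (1 - α))) = lam ^ (-p) * A ^ p * (lam / A) ^ (-(2 / (1 - α))) := by
    rw [neg_add, Real.rpow_add (by positivity), Real.div_rpow hl0.le hA.le, Real.rpow_neg hA.le,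
      div_inv_eq_mul]
  have e4 : (4:ℝ) ^ p = 2 ^ p * 2 ^ p := by
    rw [← Real.mul_rpow (by norm_num) (by norm_num)]; norm_num
  rw [e1, e2, e3, e4, Real.div_rpow hl0.le (show (0:ℝ) ≤ 2 by norm_num), Real.rpow_neg hl0.le p]
  field_simp

def ctr {d : ℕ} (c : Ed d) (R : ℝ) (k : Fin d → Fin 17) : Ed d :=
  WithLp.toLp 2 fun i => c i + R / 16 * ((k i : ℕ) - 8 : ℝ)

theorem ctr_near {d : ℕ} (c : Ed d) (R : ℝ) (hR : 0 < R) (k : Fin d → Fin 17) (i : Fin d) :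
    |ctr c R k i - c i| ≤ R / 2 := by
  have h1 : ((k i : ℕ) : ℝ) ≤ 16 := by
    have := (k i).2
    exact_mod_cast (by omega : (k i : ℕ) ≤ 16)
  have h0 : (0 : ℝ) ≤ ((k i : ℕ) : ℝ) := Nat.cast_nonneg _
  have : ctr c R k i - c i = R / 16 * ((k i : ℕ) - 8 : ℝ) := by simp [ctr]
  rw [this, abs_le]
  constructor <;> nlinarith

theorem ctr_cover {d : ℕ} (c : Ed d) (R : ℝ) (hR : 0 < R) :
    cube c R ⊆ ⋃ k : Fin d → Fin 17, cube (ctr c R k) (R / 4 / 2) := by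
  intro x hx
  have key : ∀ i, ∃ n : Fin 17, |x i - (c i + R / 16 * ((n : ℕ) - 8 : ℝ))| < R / 4 / 2 / 2 := by
    intro i
    have h := abs_lt.1 (hx i)
    set t := (x i - c i) / R * 16 + 8 with ht
    have hxt : x i = c i + R / 16 * (t - 8) := by rw [ht]; field_simp; ring
    have t0 : 0 < t := by
      by_contra hh
      push Not at hh
      nlinarith [h.1]
    have t1 : t < 16 := by
      by_contra hh
      push Not at hh
      nlinarith [h.2]
    have hf := Nat.floor_le t0.le
    have hf2 := Nat.lt_floor_add_one t
    have hlt : ⌊t⌋₊ < 17 := (Nat.floor_lt t0.le).2 (by push_cast; linarith)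
    refine ⟨⟨⌊t⌋₊, hlt⟩, ?_⟩
    rw [hxt, abs_lt]
    dsimp only
    constructor <;> nlinarith
  choose k hk using key
  exact mem_iUnion.2 ⟨k, fun i => by simpa [ctr] using hk i⟩

theorem core {d N : ℕ} {ψ : Ed d → ℝ} (hψ : IsBump ψ) (p α c₁ c₂ q : ℝ) (hp : 2 ≤ p)
    (hα : α ∈ Set.Ioo (0 : ℝ) 1) (hc₁ : 0 < c₁) (hc₂ : 0 < c₂)
    (hpq : p < q) (hqs : q < p + 2 / (1 - α))
    (B : ℝ) (hB0 : 0 < B) (hB : ∀ i, ∫ z, |pder ψ i z| ≤ B)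
    (E : ℝ) (hE : E = 2 * (N * d + 1) * c₂ * 4 ^ d * B)
    (M1 : ℝ) (hM1 : M1 = 17 ^ d * (4 ^ p * c₁ * 2 ^ d * E ^ (2 / (1 - α))))
    (c₀ : Ed d) (R₀ : ℝ)
    (u v : Ed d → En N) (g : Ed d → Mat N d)
    (W : Ed d → EuclideanSpace ℝ ((Fin N × Fin d) × Fin d))
    (hgm : StronglyMeasurable g)
    (hu : MemLp u (ENNReal.ofReal p) (volume.restrict (cube c₀ R₀)))
    (hug : IsWeakGrad (cube c₀ R₀) u g)
    (hg : MemLp g (ENNReal.ofReal p) (volume.restrict (cube c₀ R₀)))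
    (hVW : IsWeakGrad (cube c₀ R₀) (fun x => Vm p (g x)) W)
    (hi : ∀ (cq : Ed d) (R : ℝ), 0 < R → cube cq (4 * R) ⊆ cube c₀ R₀ →
          MemLp W 2 (volume.restrict (cube cq R)) ∧
          ∫⁻ x in cube cq R, (‖W x‖₊ : ℝ≥0∞) ^ 2 ≤
            ENNReal.ofReal (c₁ / R ^ 2) *
              ∫⁻ x in cube cq (4 * R), (‖Vm p (g x)‖₊ : ℝ≥0∞) ^ 2)
    (huv : u =ᵐ[volume.restrict (cube c₀ R₀)] v)
    (hii : ∀ (cq : Ed d) (R : ℝ), 0 < R → cube cq (3 * R) ⊆ cube c₀ R₀ →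
          ∀ x ∈ cube cq R, ∀ y ∈ cube cq R,
            ‖v x - v y‖ ≤
              c₂ * R ^ (1 - α) * ((⨍ z in cube cq (2 * R), ‖g z‖ ^ p) ^ (1 / p) + 1) *
                dist x y ^ α)
    (cq : Ed d) (R : ℝ) (hR : 0 < R) (hsub : cube cq (2 * R) ⊆ cube c₀ R₀) (A : ℝ)
    (hA : A = (⨍ x in cube cq (2 * R), ‖g x‖ ^ p) ^ (1 / p) + 1) :
    ∫⁻ x in cube cq R, ENNReal.ofReal (‖g x‖ ^ q) ≤
      ENNReal.ofReal ((R ^ d * (4 * E) ^ q + (M1 * R ^ d) * q * (4 * E) ^ (q - (p + 2 / (1 - α))) /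
        ((p + 2 / (1 - α)) - q)) * A ^ q) := by
  have hp0 : 0 < p := by linarith
  have hα1 : 0 < 1 - α := by linarith [hα.2]
  have hE0 : 0 < E := by rw [hE]; positivity
  have hM10 : 0 ≤ M1 := by rw [hM1]; positivity
  have hfin : IsFiniteMeasure (volume.restrict (cube c₀ R₀)) := ⟨by
    rw [Measure.restrict_apply_univ]; exact cube_vol_lt c₀ R₀⟩
  have hp1 : (1 : ℝ≥0∞) ≤ ENNReal.ofReal p := by
    rw [← ENNReal.ofReal_one]; exact ENNReal.ofReal_le_ofReal (by linarith)
  have hui : IntegrableOn u (cube c₀ R₀) := hu.integrable hp1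
  have hgi : IntegrableOn g (cube c₀ R₀) := hg.integrable hp1
  have hgp : IntegrableOn (fun x => ‖g x‖ ^ p) (cube c₀ R₀) := by
    have := hg.integrable_norm_rpow (by simpa using hp0) ENNReal.ofReal_ne_top
    rwa [ENNReal.toReal_ofReal hp0.le] at this
  have hV : IntegrableOn (fun x => Vm p (g x)) (cube c₀ R₀) := by
    refine Integrable.mono' (g := fun x => 1 + ‖g x‖ ^ p) ((integrable_const _).add hgp)
      ((Vm_continuous p hp).comp_stronglyMeasurable hgm).aestronglyMeasurable ?_
    refine Eventually.of_forall fun x => ?_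
    have := Vm_norm_sq p hp (g x)
    rw [← this]
    nlinarith [sq_nonneg (‖Vm p (g x)‖ - 1), norm_nonneg (Vm p (g x))]
  set I := ∫ x in cube cq (2 * R), ‖g x‖ ^ p with hI
  have hI0 : 0 ≤ I := integral_nonneg fun x => by positivity
  have havg : ⨍ x in cube cq (2 * R), ‖g x‖ ^ p = I / (2 * R) ^ d := by
    rw [setAverage_eq, cube_vol_real _ _ (by positivity), smul_eq_mul, hI]; field_simp
  set a := I / (2 * R) ^ d with ha
  have ha0 : 0 ≤ a := by positivity
  rw [havg] at hA
  have hA1 : 1 ≤ A := by rw [hA]; linarith [Real.rpow_nonneg ha0 (1 / p)]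
  have hA0 : 0 < A := by linarith
  have haA : a ≤ A ^ p := by
    calc a = (a ^ (1 / p)) ^ p := by
          rw [← Real.rpow_mul ha0, one_div_mul_cancel hp0.ne', Real.rpow_one]
      _ ≤ A ^ p := by
          apply Real.rpow_le_rpow (Real.rpow_nonneg ha0 _) _ hp0.le
          rw [hA]; linarith
  have hIA : I ≤ (2 * R) ^ d * A ^ p := by
    have : I = (2 * R) ^ d * a := by rw [ha]; field_simp
    rw [this]; gcongr
  have hlev : ∀ t, (4 * E) * A ≤ t → (volume.restrict (cube cq R)) {x | t < ‖g x‖} ≤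
      ENNReal.ofReal ((M1 * R ^ d) * (t / A) ^ (-(p + 2 / (1 - α)))) := by
    intro t ht
    have ht0 : 0 < t := lt_of_lt_of_le (by positivity) ht
    have hmeas : MeasurableSet {x | t < ‖g x‖} :=
      measurableSet_lt measurable_const hgm.norm.measurable
    rw [Measure.restrict_apply hmeas]
    have hcov : {x | t < ‖g x‖} ∩ cube cq R ⊆ ⋃ k : Fin d → Fin 17,
        {x | x ∈ cube (ctr cq R k) (R / 4 / 2) ∧ t < ‖g x‖} := by
      rintro x ⟨h1, h2⟩
      obtain ⟨k, hk⟩ := mem_iUnion.1 (ctr_cover cq R hR h2)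
      exact mem_iUnion.2 ⟨k, hk, h1⟩
    have hone : ∀ k : Fin d → Fin 17,
        volume {x | x ∈ cube (ctr cq R k) (R / 4 / 2) ∧ t < ‖g x‖} ≤
        ENNReal.ofReal (4 ^ p * c₁ * ((2 * R) ^ d) * E ^ (2 / (1 - α)) *
          (t / A) ^ (-(p + 2 / (1 - α)))) := by
      intro k
      have hs : ∀ r ≤ R, cube (ctr cq R k) r ⊆ cube cq (2 * R) := fun r hr =>
        cube_subset _ _ _ _ (R / 2) (ctr_near cq R hR k) (by linarith)
      have h4 : 4 * (R / 4) = R := by ring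
      obtain ⟨hW2, hWb⟩ := hi (ctr cq R k) (R / 4) (by positivity)
        ((hs _ (by linarith)).trans hsub)
      refine subcube hψ p α c₁ c₂ hp hα hc₁ hc₂ B hB0 hB (cube c₀ R₀) (cube_meas _ _) u v g W hgm
        hui hug hgi hV hVW huv (ctr cq R k) (R / 4) (by positivity)
        ((hs _ (by linarith)).trans hsub) A (4 ^ d) ((2 * R) ^ d) hA0 (by positivity)
        (by positivity) hW2 ?_ ?_ E hE t ht
      · refine le_trans hWb ?_
        gcongr
        calc _ ≤ ∫⁻ x in cube cq (2 * R), (‖Vm p (g x)‖₊ : ℝ≥0∞) ^ 2 :=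
              lintegral_mono_set (hs _ (by linarith))
          _ = ∫⁻ x in cube cq (2 * R), ENNReal.ofReal (‖g x‖ ^ p) := by
              refine lintegral_congr fun x => ?_
              rw [← Vm_norm_sq p hp, ENNReal.ofReal_pow (norm_nonneg _), ofReal_norm]
              rfl
          _ = ENNReal.ofReal I := by
              rw [hI, ofReal_integral_eq_lintegral_ofReal (hgp.mono_set hsub)]
              exact Eventually.of_forall fun x => by positivity
          _ ≤ _ := ENNReal.ofReal_le_ofReal hIA
      · intro x hx y hy
        refine (hii (ctr cq R k) (R / 4) (by positivity)
          ((hs _ (by linarith)).trans hsub) x hx y hy).trans ?_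
        have h1 : ⨍ z in cube (ctr cq R k) (2 * (R / 4)), ‖g z‖ ^ p ≤ 4 ^ d * a := by
          rw [setAverage_eq, cube_vol_real _ _ (by positivity), smul_eq_mul]
          have h2 : ∫ z in cube (ctr cq R k) (2 * (R / 4)), ‖g z‖ ^ p ≤ I := by
            apply setIntegral_mono_set (hgp.mono_set hsub)
            · exact Eventually.of_forall fun x => by positivity
            · exact (hs _ (by linarith)).eventuallyLE
          calc _ ≤ ((2 * (R / 4)) ^ d)⁻¹ * I := by gcongr
            _ = 4 ^ d * a := by
              have : (2 * R) ^ d = 4 ^ d * (2 * (R / 4)) ^ d := by rw [← mul_pow]; ring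
              rw [ha, this]; field_simp
        have h0 : 0 ≤ ⨍ z in cube (ctr cq R k) (2 * (R / 4)), ‖g z‖ ^ p := by
          rw [setAverage_eq, smul_eq_mul]
          have : 0 ≤ ∫ z in cube (ctr cq R k) (2 * (R / 4)), ‖g z‖ ^ p :=
            integral_nonneg fun x => by positivity
          positivity
        have h3 : (⨍ z in cube (ctr cq R k) (2 * (R / 4)), ‖g z‖ ^ p) ^ (1 / p) + 1 ≤
            4 ^ d * A := by
          have h41 : (1 : ℝ) ≤ 4 ^ d := one_le_pow₀ (by norm_num)
          have h5 : (⨍ z in cube (ctr cq R k) (2 * (R / 4)), ‖g z‖ ^ p) ^ (1 / p) ≤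
              4 ^ d * a ^ (1 / p) := by
            refine (Real.rpow_le_rpow h0 h1 (by positivity)).trans ?_
            rw [Real.mul_rpow (by positivity) ha0]
            gcongr
            calc ((4 : ℝ) ^ d) ^ (1 / p) ≤ ((4 : ℝ) ^ d) ^ (1 : ℝ) := by
                  apply Real.rpow_le_rpow_of_exponent_le h41
                  rw [div_le_one hp0]; linarith
              _ = _ := Real.rpow_one _
          rw [hA, mul_add]
          linarith
        gcongr
    calc _ ≤ volume (⋃ k : Fin d → Fin 17,
        {x | x ∈ cube (ctr cq R k) (R / 4 / 2) ∧ t < ‖g x‖}) := measure_mono hcov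
      _ ≤ ∑ k : Fin d → Fin 17, volume {x | x ∈ cube (ctr cq R k) (R / 4 / 2) ∧ t < ‖g x‖} :=
          measure_iUnion_fintype_le _ _
      _ ≤ ∑ k : Fin d → Fin 17, ENNReal.ofReal (4 ^ p * c₁ * ((2 * R) ^ d) * E ^ (2 / (1 - α)) *
          (t / A) ^ (-(p + 2 / (1 - α)))) := Finset.sum_le_sum fun k _ => hone k
      _ = _ := by
          rw [Finset.sum_const, Finset.card_univ, Fintype.card_fun, Fintype.card_fin,
            Fintype.card_fin, ← ENNReal.ofReal_nsmul, nsmul_eq_mul]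
          congr 1
          rw [hM1, mul_pow]
          push_cast
          ring
  exact layer_bound (volume.restrict (cube cq R)) (fun x => ‖g x‖) (fun x => norm_nonneg _)
    hgm.norm.measurable.aemeasurable A (4 * E) (M1 * R ^ d) (R ^ d) (p + 2 / (1 - α)) q hA0
    (by positivity) (by positivity) (by positivity) (by linarith) hqs
    (by rw [Measure.restrict_apply_univ, cube_vol, ENNReal.ofReal_pow hR.le]) hlev

/-- Higher integrability up to `L^q`, `q ∈ (p, p + 2/(1−α))`, for `p ≥ 2`:
`∇u ∈ L^q_loc(Q₀)` with `(⨍_Q |∇u|^q)^{1/q} ≤ C((⨍_{2Q}|∇u|^p)^{1/p} + 1)` whenever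
`2Q ⊆ Q₀`, with `C = C(d,N,p,q,α,c₁,c₂)`. -/
theorem stmt7 (d N : ℕ) (p α c₁ c₂ : ℝ) (hp : 2 ≤ p) (hα : α ∈ Set.Ioo (0 : ℝ) 1)
    (hc₁ : 0 < c₁) (hc₂ : 0 < c₂) :
    ∀ q : ℝ, p < q → q < p + 2 / (1 - α) →
    ∃ C : ℝ, 0 < C ∧
      ∀ (c₀ : Ed d) (R₀ : ℝ), 0 < R₀ →
      ∀ (u v : Ed d → En N) (g : Ed d → Mat N d)
        (W : Ed d → EuclideanSpace ℝ ((Fin N × Fin d) × Fin d)),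
        -- `u ∈ W^{1,p}(Q₀;ℝ^N)` with weak gradient `g`
        MemLp u (ENNReal.ofReal p) (volume.restrict (cube c₀ R₀)) →
        IsWeakGrad (cube c₀ R₀) u g →
        MemLp g (ENNReal.ofReal p) (volume.restrict (cube c₀ R₀)) →
        -- (i) `V(∇u) ∈ W^{1,2}_loc(Q₀)` with the Caccioppoli estimate
        IsWeakGrad (cube c₀ R₀) (fun x => Vm p (g x)) W →
        (∀ (cq : Ed d) (R : ℝ), 0 < R → cube cq (4 * R) ⊆ cube c₀ R₀ →
          MemLp W 2 (volume.restrict (cube cq R)) ∧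
          ∫⁻ x in cube cq R, (‖W x‖₊ : ℝ≥0∞) ^ 2 ≤
            ENNReal.ofReal (c₁ / R ^ 2) *
              ∫⁻ x in cube cq (4 * R), (‖Vm p (g x)‖₊ : ℝ≥0∞) ^ 2) →
        -- (ii) `v` is a continuous representative satisfying the Hölder estimate
        ContinuousOn v (cube c₀ R₀) →
        u =ᵐ[volume.restrict (cube c₀ R₀)] v →
        (∀ (cq : Ed d) (R : ℝ), 0 < R → cube cq (3 * R) ⊆ cube c₀ R₀ →
          ∀ x ∈ cube cq R, ∀ y ∈ cube cq R,
            ‖v x - v y‖ ≤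
              c₂ * R ^ (1 - α) * ((⨍ z in cube cq (2 * R), ‖g z‖ ^ p) ^ (1 / p) + 1) *
                dist x y ^ α) →
      ∀ (cq : Ed d) (R : ℝ), 0 < R → cube cq (2 * R) ⊆ cube c₀ R₀ →
        MemLp g (ENNReal.ofReal q) (volume.restrict (cube cq R)) ∧
        (⨍ x in cube cq R, ‖g x‖ ^ q) ^ (1 / q) ≤
          C * ((⨍ x in cube cq (2 * R), ‖g x‖ ^ p) ^ (1 / p) + 1) := by
  intro q hpq hqs
  obtain ⟨ψ, hψ⟩ := exists_bump d
  have hα1 : 0 < 1 - α := by linarith [hα.2]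
  have hq0 : 0 < q := by linarith
  set B : ℝ := (∑ i, ∫ z, |pder ψ i z|) + 1 with hBdef
  have hnn : ∀ i, 0 ≤ ∫ z, |pder ψ i z| := fun i => integral_nonneg fun z => abs_nonneg _
  have hB0 : 0 < B := by
    have := Finset.sum_nonneg fun i (_ : i ∈ Finset.univ) => hnn i
    rw [hBdef]; linarith
  have hB : ∀ i, ∫ z, |pder ψ i z| ≤ B := by
    intro i
    have := Finset.single_le_sum (fun i _ => hnn i) (Finset.mem_univ i)
    rw [hBdef]; linarith
  obtain ⟨E, hE⟩ : ∃ E : ℝ, E = 2 * (N * d + 1) * c₂ * 4 ^ d * B := ⟨_, rfl⟩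
  obtain ⟨M1, hM1⟩ : ∃ M1 : ℝ, M1 = 17 ^ d * (4 ^ p * c₁ * 2 ^ d * E ^ (2 / (1 - α))) := ⟨_, rfl⟩
  have hE0 : 0 < E := by rw [hE]; positivity
  have hM10 : 0 < M1 := by rw [hM1]; positivity
  obtain ⟨C2, hC2⟩ : ∃ C2 : ℝ, C2 = (4 * E) ^ q + M1 * q * (4 * E) ^ (q - (p + 2 / (1 - α))) /
        ((p + 2 / (1 - α)) - q) := ⟨_, rfl⟩
  have hC20 : 0 < C2 := by
    have : 0 < (p + 2 / (1 - α)) - q := by linarith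
    rw [hC2]; positivity
  refine ⟨C2 ^ (1 / q), by positivity, ?_⟩
  intro c₀ R₀ hR₀ u v g₀ W hu hug₀ hg₀ hVW₀ hi₀ _ huv hii₀ cq R hR hsub
  obtain ⟨g, hgm, hgg⟩ := hg₀.1
  have hsubae : ∀ S ⊆ cube c₀ R₀, g₀ =ᵐ[volume.restrict S] g := fun S hS =>
    ae_restrict_of_ae_restrict_of_subset hS hgg
  have havg : ∀ S ⊆ cube c₀ R₀, ∀ t : ℝ, ⨍ z in S, ‖g₀ z‖ ^ t = ⨍ z in S, ‖g z‖ ^ t := by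
    intro S hS t
    rw [setAverage_eq, setAverage_eq]
    congr 1
    apply integral_congr_ae
    filter_upwards [hsubae S hS] with z hz
    rw [hz]
  have hRs : cube cq R ⊆ cube cq (2 * R) :=
    cube_subset _ _ _ _ 0 (fun i => by simp) (by linarith)
  rw [havg _ (hRs.trans hsub), havg _ hsub]
  have hcs : ∀ (c : Ed d) (r r' : ℝ), r ≤ r' → cube c r ⊆ cube c r' := fun c r r' h =>
    cube_subset _ _ _ _ 0 (fun i => by simp) (by linarith)
  obtain ⟨A, hA⟩ : ∃ A : ℝ, A = (⨍ x in cube cq (2 * R), ‖g x‖ ^ p) ^ (1 / p) + 1 := ⟨_, rfl⟩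
  have hcore := core hψ p α c₁ c₂ q hp hα hc₁ hc₂ hpq hqs B hB0 hB E hE M1 hM1 c₀ R₀ u v g W hgm
    hu (IsWeakGrad_congr (EventuallyEq.refl _ _) hgg hug₀) ((memLp_congr_ae hgg).1 hg₀)
    (IsWeakGrad_congr (hgg.mono fun x hx => by simp only [hx]) (EventuallyEq.refl _ _) hVW₀)
    (by
      intro c r hr hs
      refine ⟨(hi₀ c r hr hs).1, (hi₀ c r hr hs).2.trans (le_of_eq ?_)⟩
      congr 1
      apply lintegral_congr_ae
      filter_upwards [hsubae _ hs] with z hz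
      rw [hz])
    huv
    (by
      intro c r hr hs x hx y hy
      rw [← havg _ ((hcs c (2 * r) (3 * r) (by linarith)).trans hs)]
      exact hii₀ c r hr hs x hx y hy)
    cq R hR hsub A hA
  rw [← hA]
  have hA0 : 0 ≤ A := by
    have : 0 ≤ ⨍ x in cube cq (2 * R), ‖g x‖ ^ p := by
      rw [setAverage_eq, smul_eq_mul]
      have : 0 ≤ ∫ z in cube cq (2 * R), ‖g z‖ ^ p :=
        integral_nonneg fun x => by positivity
      positivity
    rw [hA]; positivity
  have hK : (R ^ d * (4 * E) ^ q + (M1 * R ^ d) * q * (4 * E) ^ (q - (p + 2 / (1 - α))) /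
        ((p + 2 / (1 - α)) - q)) * A ^ q = R ^ d * (C2 * A ^ q) := by
    rw [hC2]; ring
  rw [hK] at hcore
  refine ⟨?_, ?_⟩
  · refine (memLp_congr_ae (hsubae _ (hRs.trans hsub))).2 ⟨hgm.aestronglyMeasurable, ?_⟩
    rw [eLpNorm_lt_top_iff_lintegral_rpow_enorm_lt_top (by simpa using hq0) ENNReal.ofReal_ne_top,
      ENNReal.toReal_ofReal hq0.le]
    refine lt_of_le_of_lt (le_of_eq ?_) (hcore.trans_lt ENNReal.ofReal_lt_top)
    refine lintegral_congr fun x => ?_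
    rw [← ENNReal.ofReal_rpow_of_nonneg (norm_nonneg _) hq0.le, ofReal_norm]
  · have hint : ∫ x in cube cq R, ‖g x‖ ^ q ≤ R ^ d * (C2 * A ^ q) := by
      rw [integral_eq_lintegral_of_nonneg_ae (Eventually.of_forall fun x => by positivity)
        (hgm.norm.measurable.pow_const q).aestronglyMeasurable]
      exact ENNReal.toReal_le_of_le_ofReal (by positivity) hcore
    have havq : ⨍ x in cube cq R, ‖g x‖ ^ q ≤ C2 * A ^ q := by
      rw [setAverage_eq, cube_vol_real _ _ hR.le, smul_eq_mul,
        inv_mul_le_iff₀ (by positivity)]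
      exact hint
    have h0 : 0 ≤ ⨍ x in cube cq R, ‖g x‖ ^ q := by
      rw [setAverage_eq, smul_eq_mul]
      have : 0 ≤ ∫ z in cube cq R, ‖g z‖ ^ q :=
        integral_nonneg fun x => by positivity
      positivity
    calc _ ≤ (C2 * A ^ q) ^ (1 / q) := Real.rpow_le_rpow h0 havq (by positivity)
      _ = _ := by
        rw [Real.mul_rpow hC20.le (by positivity), ← Real.rpow_mul hA0, mul_one_div_cancel hq0.ne',
          Real.rpow_one]
end
end

section
/- Let d ∈ ℕ, p ≥ 1, α ∈ (0,1], let B₀ ⊂ ℝ^d be an open ball and 3B₀ the concentric ball with three times the radius, and let u : 3B₀ → ℝ be continuous and integrable on 3B₀. Define the Campanato seminorm [u]_{L^{p,d+pα}(3B₀)} := sup{ρ^{−α}(⨍_B|u − ⟨u⟩_B|^p)^{1/p} : B an open ball of radius ρ with B ⊆ 3B₀} and the Hölder seminorm [u]_{C^α(B₀)} := sup{|u(x) − u(y)|/|x−y|^α : x, y ∈ B₀, x ≠ y}. Then there is C > 0, depending only on d and α, such that [u]_{C^α(B₀)} ≤ C [u]_{L^{p,d+pα}(3B₀)}. -/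
open MeasureTheory Metric

theorem aux_avg {d : ℕ} (u : EuclideanSpace ℝ (Fin d) → ℝ) (a : ℝ)
    (c : EuclideanSpace ℝ (Fin d)) (ρ : ℝ) (hρ : 0 < ρ)
    (hu : IntegrableOn u (ball c ρ)) :
    |(⨍ z in ball c ρ, u z) - a| ≤ ⨍ z in ball c ρ, |u z - a| := by
  have h0 : volume (ball c ρ) ≠ 0 := (measure_ball_pos _ _ hρ).ne'
  have h1 : volume (ball c ρ) ≠ ⊤ := measure_ball_lt_top.ne
  have hc : IntegrableOn (fun _ : EuclideanSpace ℝ (Fin d) => a) (ball c ρ) :=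
    integrableOn_const h1
  have hpos : 0 < (volume (ball c ρ)).toReal := ENNReal.toReal_pos h0 h1
  have e : (⨍ z in ball c ρ, u z) - a = ⨍ z in ball c ρ, (u z - a) := by
    rw [setAverage_eq, setAverage_eq, integral_sub hu hc, setIntegral_const]
    simp only [smul_eq_mul, measureReal_def]
    field_simp
  rw [e, setAverage_eq, setAverage_eq]
  simp only [smul_eq_mul]
  rw [abs_mul, abs_of_nonneg (by positivity)]
  gcongr
  exact abs_integral_le_integral_abs

theorem aux_jensen {d : ℕ} (f : EuclideanSpace ℝ (Fin d) → ℝ) (hf0 : ∀ z, 0 ≤ f z)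
    (p : ℝ) (hp : 1 ≤ p)
    (c : EuclideanSpace ℝ (Fin d)) (ρ : ℝ) (hρ : 0 < ρ)
    (hf : ContinuousOn f (closedBall c ρ)) :
    ⨍ z in ball c ρ, f z ≤ (⨍ z in ball c ρ, f z ^ p) ^ (1 / p) := by
  have h0 : volume (ball c ρ) ≠ 0 := (measure_ball_pos _ _ hρ).ne'
  have h1 : volume (ball c ρ) ≠ ⊤ := measure_ball_lt_top.ne
  have hp0 : 0 < p := by linarith
  have hi : IntegrableOn f (ball c ρ) :=
    (hf.integrableOn_compact (isCompact_closedBall c ρ)).mono_set ball_subset_closedBall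
  have hi2 : IntegrableOn (fun z => f z ^ p) (ball c ρ) :=
    ((hf.rpow_const (fun _ _ => Or.inr hp0.le)).integrableOn_compact
      (isCompact_closedBall c ρ)).mono_set ball_subset_closedBall
  have hJ := (convexOn_rpow hp).map_set_average_le
    (Real.continuous_rpow_const hp0.le).continuousOn isClosed_Ici h0 h1
    (Filter.Eventually.of_forall fun z => hf0 z) hi hi2
  have hn : 0 ≤ ⨍ z in ball c ρ, f z := by
    rw [setAverage_eq]
    exact smul_nonneg (by positivity) (integral_nonneg hf0)
  calc ⨍ z in ball c ρ, f z = ((⨍ z in ball c ρ, f z) ^ p) ^ (1 / p) := by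
        rw [← Real.rpow_mul hn, mul_one_div_cancel hp0.ne', Real.rpow_one]
    _ ≤ _ := Real.rpow_le_rpow (by positivity) hJ (by positivity)

theorem aux_half {d : ℕ} (f : EuclideanSpace ℝ (Fin d) → ℝ) (hf0 : ∀ z, 0 ≤ f z)
    (c c' : EuclideanSpace ℝ (Fin d)) (ρ : ℝ) (hρ : 0 < ρ)
    (hf : IntegrableOn f (ball c ρ)) (hs : ball c' (ρ / 2) ⊆ ball c ρ) :
    ⨍ z in ball c' (ρ / 2), f z ≤ 2 ^ d * ⨍ z in ball c ρ, f z := by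
  have hI : ∫ z in ball c' (ρ / 2), f z ≤ ∫ z in ball c ρ, f z :=
    setIntegral_mono_set hf (Filter.Eventually.of_forall hf0)
      (Filter.Eventually.of_forall hs)
  have hv : volume.real (ball c' (ρ / 2)) = (1 / 2) ^ d * volume.real (ball c ρ) := by
    simp only [measureReal_def]
    rw [Measure.addHaar_ball_of_pos _ _ hρ, Measure.addHaar_ball_of_pos _ _ (half_pos hρ)]
    simp only [finrank_euclideanSpace_fin, ENNReal.toReal_mul]
    rw [ENNReal.toReal_ofReal (by positivity), ENNReal.toReal_ofReal (by positivity)]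
    rw [div_pow, one_div, inv_pow]; ring
  rw [setAverage_eq, setAverage_eq, hv]
  simp only [smul_eq_mul]
  rw [mul_inv, ← mul_assoc, one_div, inv_pow, inv_inv]
  gcongr

theorem aux_tendsto {d : ℕ} (u : EuclideanSpace ℝ (Fin d) → ℝ)
    (c : EuclideanSpace ℝ (Fin d)) (R : ℝ) (hR : 0 < R)
    (hu : ContinuousOn u (closedBall c R)) :
    Filter.Tendsto (fun n : ℕ => ⨍ z in ball c (R / 2 ^ n), u z) Filter.atTop (nhds (u c)) := by
  have hat : ContinuousAt u c := hu.continuousAt (closedBall_mem_nhds c hR)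
  have hi : IntegrableOn u (ball c R) :=
    (hu.integrableOn_compact (isCompact_closedBall c R)).mono_set ball_subset_closedBall
  rw [Metric.tendsto_atTop]
  intro ε hε
  obtain ⟨δ, hδ, h⟩ := Metric.continuousAt_iff.1 hat (ε / 2) (half_pos hε)
  have ht : Filter.Tendsto (fun n : ℕ => R / 2 ^ n) Filter.atTop (nhds 0) :=
    Filter.Tendsto.const_div_atTop (tendsto_pow_atTop_atTop_of_one_lt (by norm_num)) R
  obtain ⟨N, hN⟩ := Filter.eventually_atTop.1 (ht.eventually (gt_mem_nhds hδ))
  refine ⟨N, fun n hn => ?_⟩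
  have hs := hN n hn
  have hsp : 0 < R / 2 ^ n := by positivity
  have hsR : R / 2 ^ n ≤ R := div_le_self hR.le (one_le_pow₀ (by norm_num))
  have hin := hi.mono_set (ball_subset_ball (x := c) hsR)
  have h1 : volume (ball c (R / 2 ^ n)) ≠ ⊤ := measure_ball_lt_top.ne
  have hpos : 0 < volume.real (ball c (R / 2 ^ n)) :=
    ENNReal.toReal_pos (measure_ball_pos _ _ hsp).ne' h1
  rw [Real.dist_eq]
  refine (aux_avg u (u c) c _ hsp hin).trans_lt ?_
  have : ∫ z in ball c (R / 2 ^ n), |u z - u c| ≤ ∫ z in ball c (R / 2 ^ n), ε / 2 := by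
    refine setIntegral_mono_on (hin.sub (integrableOn_const h1)).abs
      (integrableOn_const h1) measurableSet_ball fun z hz => ?_
    have := h (lt_trans (mem_ball.1 hz) hs)
    rw [Real.dist_eq] at this
    exact this.le
  rw [setIntegral_const, smul_eq_mul] at this
  rw [setAverage_eq, smul_eq_mul]
  calc _ ≤ (volume.real (ball c (R / 2 ^ n)))⁻¹ * (volume.real (ball c (R / 2 ^ n)) * (ε / 2)) := by
        gcongr
    _ = ε / 2 := by field_simp
    _ < ε := by linarith

/-- Campanato implies Hölder: there is `C > 0` depending only on `d` and `α`
such that whenever `u` is continuous and integrable on `3B₀` and its `L^{p,d+pα}`-Campanato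
seminorm on `3B₀` is bounded by `K` (i.e. `(⨍_B |u − ⟨u⟩_B|^p)^{1/p} ≤ K ρ^α` for every ball
`B ⊆ 3B₀` of radius `ρ`), then `[u]_{C^α(B₀)} ≤ C K`. -/
theorem stmt10 (d : ℕ) (α : ℝ) (hα : α ∈ Set.Ioc (0 : ℝ) 1) :
    ∃ C : ℝ, 0 < C ∧
      ∀ (p : ℝ), 1 ≤ p →
      ∀ (x₀ : EuclideanSpace ℝ (Fin d)) (ρ₀ : ℝ), 0 < ρ₀ →
      ∀ u : EuclideanSpace ℝ (Fin d) → ℝ,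
        ContinuousOn u (ball x₀ (3 * ρ₀)) →
        IntegrableOn u (ball x₀ (3 * ρ₀)) →
        ∀ K : ℝ, 0 ≤ K →
        (∀ (c : EuclideanSpace ℝ (Fin d)) (ρ : ℝ), 0 < ρ → ball c ρ ⊆ ball x₀ (3 * ρ₀) →
          (⨍ z in ball c ρ, |u z - ⨍ w in ball c ρ, u w| ^ p) ^ (1 / p) ≤ K * ρ ^ α) →
        ∀ x ∈ ball x₀ ρ₀, ∀ y ∈ ball x₀ ρ₀, x ≠ y →
          |u x - u y| ≤ C * K * dist x y ^ α := by
  obtain ⟨hα0, -⟩ := hα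
  set q : ℝ := (1 / 2 : ℝ) ^ α with hq
  have hq0 : 0 < q := by positivity
  have hq1 : q < 1 := Real.rpow_lt_one (by norm_num) (by norm_num) hα0
  have hq1' : 0 < 1 - q := by linarith
  refine ⟨2 * (2 ^ d / (1 - q) + 2 ^ d), by positivity, ?_⟩
  intro p hp x₀ ρ₀ hρ₀ u hu hui K hK hcamp x hx y hy hxy
  -- one step
  have step : ∀ (c c' : EuclideanSpace ℝ (Fin d)) (ρ : ℝ), 0 < ρ →
      closedBall c ρ ⊆ ball x₀ (3 * ρ₀) → ball c' (ρ / 2) ⊆ ball c ρ →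
      |(⨍ z in ball c' (ρ / 2), u z) - ⨍ z in ball c ρ, u z| ≤ 2 ^ d * (K * ρ ^ α) := by
    intro c c' ρ hρ hc hs
    have hcu := hu.mono hc
    have hi : IntegrableOn u (ball c ρ) := hui.mono_set (ball_subset_closedBall.trans hc)
    set a := ⨍ z in ball c ρ, u z with ha
    have hca : ContinuousOn (fun z => |u z - a|) (closedBall c ρ) :=
      (hcu.sub continuousOn_const).abs
    have hia : IntegrableOn (fun z => |u z - a|) (ball c ρ) :=
      (hca.integrableOn_compact (isCompact_closedBall c ρ)).mono_set ball_subset_closedBall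
    refine (aux_avg u a c' _ (half_pos hρ) (hi.mono_set hs)).trans ?_
    refine (aux_half _ (fun z => abs_nonneg _) c c' ρ hρ hia hs).trans ?_
    gcongr
    exact (aux_jensen _ (fun z => abs_nonneg _) p hp c ρ hρ hca).trans
      (hcamp c ρ hρ (ball_subset_closedBall.trans hc))
  set r := dist x y with hr
  have hr0 : 0 < r := dist_pos.2 hxy
  have hr2 : r < 2 * ρ₀ := by
    have := dist_triangle_right x y x₀
    rw [mem_ball] at hx hy
    linarith
  have cover : ∀ z ∈ ball x₀ ρ₀, closedBall z r ⊆ ball x₀ (3 * ρ₀) := by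
    intro z hz w hw
    rw [mem_ball] at hz ⊢
    rw [mem_closedBall] at hw
    have := dist_triangle w z x₀
    linarith
  have tele : ∀ z ∈ ball x₀ ρ₀,
      |(⨍ w in ball z r, u w) - u z| ≤ 2 ^ d * (K * r ^ α) / (1 - q) := by
    intro z hz
    have ht := aux_tendsto u z r hr0 (hu.mono (cover z hz))
    have := dist_le_of_le_geometric_of_tendsto₀ q (2 ^ d * (K * r ^ α)) hq1 (fun n => ?_) ht
    · simpa [Real.dist_eq] using this
    · have hsp : 0 < r / 2 ^ n := by positivity
      have hsR : r / 2 ^ n ≤ r := div_le_self hr0.le (one_le_pow₀ (by norm_num))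
      have e : r / 2 ^ (n + 1) = r / 2 ^ n / 2 := by rw [pow_succ]; field_simp
      rw [dist_comm, Real.dist_eq, e]
      refine (step z z _ hsp ((closedBall_subset_closedBall hsR).trans (cover z hz))
        (ball_subset_ball (by linarith))).trans (le_of_eq ?_)
      have : (r / 2 ^ n) ^ α = r ^ α * q ^ n := by
        rw [div_eq_mul_inv, ← inv_pow, Real.mul_rpow hr0.le (by positivity), hq,
          ← Real.rpow_natCast, ← Real.rpow_mul (by norm_num), mul_comm (n : ℝ) α,
          Real.rpow_mul (by norm_num), Real.rpow_natCast, one_div]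
      rw [this]; ring
  set m := midpoint ℝ x y with hm
  have hmx : ball m (r / 2) ⊆ ball x r := ball_subset_ball' (by
    rw [hm, dist_midpoint_left]; simp; rw [← hr]; linarith)
  have hmy : ball m (r / 2) ⊆ ball y r := ball_subset_ball' (by
    rw [hm, dist_midpoint_right]; simp; rw [← hr]; linarith)
  have a1 := abs_le.1 (tele x hx)
  have a2 := abs_le.1 (tele y hy)
  have a3 := abs_le.1 (step x m r hr0 (cover x hx) hmx)
  have a4 := abs_le.1 (step y m r hr0 (cover y hy) hmy)
  have e : 2 * (2 ^ d / (1 - q) + 2 ^ d) * K * r ^ α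
      = 2 * (2 ^ d * (K * r ^ α) / (1 - q)) + 2 * (2 ^ d * (K * r ^ α)) := by ring
  rw [e, abs_le]
  constructor <;> linarith [a1.1, a1.2, a2.1, a2.2, a3.1, a3.2, a4.1, a4.2]
end
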